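/- arXiv:1504.03548 — 6 statements merged into one kernel-verified Lean document; each statement's English description precedes it below -/
import Mathlib

section
/- Let C be a connected graded k-coalgebra, and let Δⁿ : Cₙ → C₁^{⊗n} be defined by Δ¹ = id_{C₁} and Δⁿ = (id_{C₁} ⊗ Δⁿ⁻¹)∘Δ_{1,n−1} for n ≥ 2. Then the following are equivalent: (i) C is strongly graded, i.e., Δ_{p,q} is injective for all p,q ≥ 0; (ii) Δⁿ is injective for all n ≥ 2; (iii) Δ_{1,n} is injective for all n ≥ 1; (iv) Δ_{n,1} is injective for all n ≥ 1. -/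
/-!
Let `π n : C → Cₙ` be the homogeneous projections. The components of the comultiplication are
`Δ_{p,q} = (π p ⊗ π q) ∘ Δ` on all of `C` (`Δc_eq`), so coassociativity of `Δ` yields
`(Δ_{p,q} ⊗ id) ∘ Δ_{p+q,r} = (id ⊗ Δ_{q,r}) ∘ Δ_{p,q+r}` (`coassoc_component`).

Over a field, tensoring preserves injectivity. Hence if `Δ_{p,q+r}` and `Δ_{q,r}` are injective,
so is `Δ_{p+q,r}`, and symmetrically (`inj_left`, `inj_right`). By the counit axioms `Δ_{0,n}` and
`Δ_{n,0}` are always injective. Induction on `p` (resp. `q`) then gives injectivity of all `Δ_{p,q}`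
from that of the `Δ_{1,n}` (resp. `Δ_{n,1}`). Finally `Δⁿ⁺² = (id ⊗ Δⁿ⁺¹) ∘ Δ_{1,n+1}` shows
that injectivity of all `Δⁿ` is the same as injectivity of all `Δ_{1,n}`.
-/


open TensorProduct

noncomputable section
namespace Koszul

variable (k : Type) [Field k]

/-- Iterated tensor powers: `TP V 0 = k`, `TP V 1 = V`, `TP V (n+2) = V ⊗ TP V (n+1)`. -/
def TP (V : Type) [AddCommGroup V] [Module k V] : ℕ → ModuleCat k
  | 0 => ModuleCat.of k k
  | 1 => ModuleCat.of k V
  | (n+2) => ModuleCat.of k (V ⊗[k] (TP V (n+1)))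

variable (C : Type) [AddCommGroup C] [Module k C] [Coalgebra k C]
variable (𝒞 : ℕ → Submodule k C)

/-- The data exhibiting `C = ⊕ₙ Cₙ` as a connected graded coalgebra: a grouplike element `g`
spanning `C₀`, the counit vanishing in positive degrees, and the components
`Δc p q : C_{p+q} → C_p ⊗ C_q` of the comultiplication (extended by `0` to the other
homogeneous components of `C`). -/
structure GradedCoalgebraData where
  g : C
  Δc : ∀ p q : ℕ, C →ₗ[k] (↥(𝒞 p) ⊗[k] ↥(𝒞 q))
  hC0 : 𝒞 0 = Submodule.span k {g}
  hgrp : Coalgebra.comul (R := k) g = g ⊗ₜ[k] g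
  hcu : Coalgebra.counit (R := k) g = 1
  hcounit : ∀ n, 1 ≤ n → ∀ x ∈ 𝒞 n, Coalgebra.counit (R := k) x = 0
  hΔc : ∀ n, ∀ x ∈ 𝒞 n, Coalgebra.comul (R := k) x =
    ∑ p ∈ Finset.range (n+1),
      (TensorProduct.map (𝒞 p).subtype (𝒞 (n-p)).subtype) (Δc p (n-p) x)
  hΔc0 : ∀ p q n, n ≠ p + q → ∀ x ∈ 𝒞 n, Δc p q x = 0

/-- `C` is strongly graded: every component `Δ_{p,q} : C_{p+q} → C_p ⊗ C_q` is injective. -/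
def GradedCoalgebraData.Strong (D : GradedCoalgebraData k C 𝒞) : Prop :=
  ∀ p q : ℕ, ∀ x ∈ 𝒞 (p + q), D.Δc p q x = 0 → x = 0

/-- `Δ₊ : x ↦ Δ(x) - g ⊗ x - x ⊗ g`, the reduced comultiplication; on a homogeneous element
of positive degree `n` it equals the sum of the components `Δ_{p,q}` with `p, q ≥ 1`. -/
def deltaPlus (g : C) : C →ₗ[k] C ⊗[k] C :=
  Coalgebra.comul - (TensorProduct.mk k C C g) - ((TensorProduct.mk k C C).flip g)

/-- `expand Δp n i` applies `Δp` to the `(i+1)`-st tensor factor of `C^{⊗(n+1)}`. -/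
def expand (Δp : C →ₗ[k] C ⊗[k] C) : (n i : ℕ) → (↥(TP k C (n+1)) →ₗ[k] ↥(TP k C (n+2)))
  | 0, 0 => Δp
  | 0, (_+1) => 0
  | (n+1), 0 => (TensorProduct.assoc k C C ↥(TP k C (n+1))).toLinearMap.comp
      (LinearMap.rTensor ↥(TP k C (n+1)) Δp)
  | (n+1), (i+1) => LinearMap.lTensor C (expand Δp n i)

/-- The differential `dⁿ = Σ_{i=1}^{n} (-1)^{i-1} id ⊗ ⋯ ⊗ Δ₊ ⊗ ⋯ ⊗ id` of the normalized
cobar complex (with `d⁰ = 0`). -/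
def cobarD (Δp : C →ₗ[k] C ⊗[k] C) : (n : ℕ) → (↥(TP k C n) →ₗ[k] ↥(TP k C (n+1)))
  | 0 => 0
  | (n+1) => ∑ i ∈ Finset.range (n+1), ((-1:k)^i) • expand k C Δp n i

/-- `omega 𝒱 n m = ⊕_{𝐦 ∈ 𝒫ₙ(m)} V_{m₁} ⊗ ⋯ ⊗ V_{mₙ}`: the span, inside the `n`-th tensor
power, of tensors of homogeneous elements of positive degrees summing to `m`. -/
def omega {V : Type} [AddCommGroup V] [Module k V] (𝒱 : ℕ → Submodule k V) :
    (n m : ℕ) → Submodule k ↥(TP k V n)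
  | 0, m => if m = 0 then ⊤ else ⊥
  | 1, m => if m = 0 then ⊥ else 𝒱 m
  | (n+2), m => ⨆ p ∈ Finset.Icc 1 m,
      LinearMap.range (TensorProduct.map (𝒱 p).subtype (omega 𝒱 (n+1) (m-p)).subtype)

/-- `Ext_C^{n,m}(k,k) = Ker dⁿ_m / Im dⁿ⁻¹_m`, computed from the degree-`m` part of the
normalized cobar complex of `C` (for `n = 0` there is nothing to quotient by). -/
abbrev ExtGrp (Δp : C →ₗ[k] C ⊗[k] C) : (n m : ℕ) → Type
  | 0, m => ↥(LinearMap.ker (cobarD k C Δp 0) ⊓ omega k 𝒞 0 m)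
  | (n+1), m =>
      ↥(LinearMap.ker (cobarD k C Δp (n+1)) ⊓ omega k 𝒞 (n+1) m) ⧸
        (Submodule.comap (LinearMap.ker (cobarD k C Δp (n+1)) ⊓ omega k 𝒞 (n+1) m).subtype
          (Submodule.map (cobarD k C Δp n) (omega k 𝒞 n m)))

variable [DirectSum.Decomposition 𝒞]

/-- The iterated comultiplication `Δ(m) : Cₘ → C₁^{⊗m}`, `Δ(1) = id` (realized on all of `C`
via the projection onto `C₁`) and `Δ(m) = (id ⊗ Δ(m-1)) ∘ Δ_{1,m-1}`. -/
def deltaIter (D : GradedCoalgebraData k C 𝒞) : (m : ℕ) → (C →ₗ[k] ↥(TP k ↥(𝒞 1) m))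
  | 0 => 0
  | 1 => (DirectSum.component k ℕ (fun i => ↥(𝒞 i)) 1).comp
      (DirectSum.decomposeLinearEquiv 𝒞).toLinearMap
  | (n+2) => (TensorProduct.map LinearMap.id ((deltaIter D (n+1)).comp (𝒞 (n+1)).subtype)).comp
      (D.Δc 1 (n+1))

set_option linter.unusedSectionVars false

/-- The projection `C → Cₙ` onto the degree-`n` homogeneous component. -/
def proj (n : ℕ) : C →ₗ[k] ↥(𝒞 n) :=
  (DirectSum.component k ℕ (fun i => ↥(𝒞 i)) n).comp
    (DirectSum.decomposeLinearEquiv 𝒞).toLinearMap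

variable {k C 𝒞}

lemma proj_coe (n : ℕ) (x : 𝒞 n) : proj k C 𝒞 n x = x := by
  change DirectSum.decompose 𝒞 (x : C) n = x
  rw [DirectSum.decompose_coe, DirectSum.of_eq_same]

lemma proj_of_ne {m n : ℕ} (h : m ≠ n) (x : 𝒞 m) : proj k C 𝒞 n x = 0 := by
  change DirectSum.decompose 𝒞 (x : C) n = 0
  rw [DirectSum.decompose_coe, DirectSum.of_eq_of_ne _ _ _ h.symm]

lemma proj_comp_subtype (n : ℕ) : proj k C 𝒞 n ∘ₗ (𝒞 n).subtype = LinearMap.id :=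
  LinearMap.ext fun x => proj_coe n x

lemma proj_comp_subtype_of_ne {m n : ℕ} (h : m ≠ n) :
    proj k C 𝒞 n ∘ₗ (𝒞 m).subtype = 0 :=
  LinearMap.ext fun x => proj_of_ne h x

/-- Linear maps out of `C` agree as soon as they agree on homogeneous elements. -/
lemma hom_ext_homogeneous {M : Type} [AddCommGroup M] [Module k M] {f f' : C →ₗ[k] M}
    (h : ∀ n, ∀ x ∈ 𝒞 n, f x = f' x) : f = f' := by
  ext x
  induction x using DirectSum.Decomposition.inductionOn 𝒞 with
  | zero => simp
  | homogeneous x => exact h _ _ x.2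
  | add a b ha hb => simp [ha, hb]

/-- A linear map vanishing outside degree `n` factors through the projection to degree `n`. -/
lemma comp_subtype_comp_proj {M : Type} [AddCommGroup M] [Module k M] (f : C →ₗ[k] M) (n : ℕ)
    (h : ∀ m, m ≠ n → ∀ x ∈ 𝒞 m, f x = 0) : (f ∘ₗ (𝒞 n).subtype) ∘ₗ proj k C 𝒞 n = f := by
  refine hom_ext_homogeneous (𝒞 := 𝒞) fun m x hx => ?_
  by_cases hm : m = n
  · subst hm
    simp [proj_coe m ⟨x, hx⟩]
  · simp [proj_of_ne hm ⟨x, hx⟩, h m hm x hx]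

lemma Δc_eq (D : GradedCoalgebraData k C 𝒞) (p q : ℕ) :
    D.Δc p q = TensorProduct.map (proj k C 𝒞 p) (proj k C 𝒞 q) ∘ₗ Coalgebra.comul := by
  refine hom_ext_homogeneous (𝒞 := 𝒞) fun n x hx => ?_
  rw [LinearMap.comp_apply, D.hΔc n x hx, map_sum]
  simp only [TensorProduct.map_map]
  by_cases hn : n = p + q
  · subst hn
    rw [Finset.sum_eq_single p]
    · rw [Nat.add_sub_cancel_left]
      simp [proj_comp_subtype]
    · intro b _ hb
      simp [proj_comp_subtype_of_ne hb]
    · intro h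
      exact absurd (Finset.mem_range.2 (by omega)) h
  · rw [D.hΔc0 p q n hn x hx, Finset.sum_eq_zero]
    intro b hb
    rw [Finset.mem_range] at hb
    by_cases hbp : b = p
    · have : n - b ≠ q := by omega
      simp [proj_comp_subtype_of_ne this]
    · simp [proj_comp_subtype_of_ne hbp]

lemma Δc_factor (D : GradedCoalgebraData k C 𝒞) (p q : ℕ) :
    (D.Δc p q ∘ₗ (𝒞 (p + q)).subtype) ∘ₗ proj k C 𝒞 (p + q) = D.Δc p q :=
  comp_subtype_comp_proj _ _ fun m hm x hx => D.hΔc0 p q m hm x hx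

/-- Homogeneous coassociativity:
`(Δ_{p,q} ⊗ id) ∘ Δ_{p+q,r} = (id ⊗ Δ_{q,r}) ∘ Δ_{p,q+r}` up to the associator. -/
lemma coassoc_component (D : GradedCoalgebraData k C 𝒞) (p q r : ℕ) (x : C) :
    TensorProduct.assoc k _ _ _
      (LinearMap.rTensor (𝒞 r) (D.Δc p q ∘ₗ (𝒞 (p + q)).subtype) (D.Δc (p + q) r x)) =
    LinearMap.lTensor (𝒞 p) (D.Δc q r ∘ₗ (𝒞 (q + r)).subtype) (D.Δc p (q + r) x) := by
  have hl : LinearMap.rTensor (𝒞 r) (D.Δc p q ∘ₗ (𝒞 (p + q)).subtype) ∘ₗ D.Δc (p + q) r =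
      TensorProduct.map (TensorProduct.map (proj k C 𝒞 p) (proj k C 𝒞 q)) (proj k C 𝒞 r) ∘ₗ
        LinearMap.rTensor C Coalgebra.comul ∘ₗ Coalgebra.comul := by
    rw [Δc_eq D (p + q) r, ← LinearMap.comp_assoc, ← LinearMap.comp_assoc,
      LinearMap.rTensor_comp_map, LinearMap.map_comp_rTensor, Δc_factor, ← Δc_eq]
  have hr : LinearMap.lTensor (𝒞 p) (D.Δc q r ∘ₗ (𝒞 (q + r)).subtype) ∘ₗ D.Δc p (q + r) =
      TensorProduct.map (proj k C 𝒞 p) (TensorProduct.map (proj k C 𝒞 q) (proj k C 𝒞 r)) ∘ₗ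
        LinearMap.lTensor C Coalgebra.comul ∘ₗ Coalgebra.comul := by
    rw [Δc_eq D p (q + r), ← LinearMap.comp_assoc, ← LinearMap.comp_assoc,
      LinearMap.lTensor_comp_map, LinearMap.map_comp_lTensor, Δc_factor, ← Δc_eq]
  have hl' := LinearMap.congr_fun hl x
  have hr' := LinearMap.congr_fun hr x
  simp only [LinearMap.comp_apply] at hl' hr'
  rw [hl', hr', ← Coalgebra.coassoc_apply]
  exact (LinearMap.congr_fun (TensorProduct.map_map_comp_assoc_eq
    (proj k C 𝒞 p) (proj k C 𝒞 q) (proj k C 𝒞 r)) _).symm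

/-- Injectivity of `Δ_{p,q}` on `C_{p+q}`. -/
def Inj (D : GradedCoalgebraData k C 𝒞) (p q : ℕ) : Prop :=
  ∀ x ∈ 𝒞 (p + q), D.Δc p q x = 0 → x = 0

/-- Kernel triviality of `f` on a homogeneous component as injectivity of the restriction. -/
lemma injective_restrict {M : Type} [AddCommGroup M] [Module k M] {f : C →ₗ[k] M} {n : ℕ}
    (h : ∀ x ∈ 𝒞 n, f x = 0 → x = 0) : Function.Injective (f ∘ₗ (𝒞 n).subtype) :=
  (injective_iff_map_eq_zero _).2 fun x hx => Subtype.ext (h x x.2 hx)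

lemma inj_left (D : GradedCoalgebraData k C 𝒞) {p q r : ℕ}
    (h₁ : Inj D p (q + r)) (h₂ : Inj D q r) : Inj D (p + q) r := by
  intro x hx h0
  have h := coassoc_component D p q r x
  rw [h0, map_zero, map_zero] at h
  refine h₁ x (by rwa [← add_assoc]) ?_
  exact (injective_iff_map_eq_zero _).1
    (Module.Flat.lTensor_preserves_injective_linearMap _ (injective_restrict h₂)) _ h.symm

lemma inj_right (D : GradedCoalgebraData k C 𝒞) {p q r : ℕ}
    (h₁ : Inj D (p + q) r) (h₂ : Inj D p q) : Inj D p (q + r) := by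
  intro x hx h0
  have h := coassoc_component D p q r x
  rw [h0, map_zero, LinearEquiv.map_eq_zero_iff] at h
  refine h₁ x (by rwa [add_assoc]) ?_
  exact (injective_iff_map_eq_zero _).1
    (Module.Flat.rTensor_preserves_injective_linearMap _ (injective_restrict h₂)) _ h

lemma counit_factor (D : GradedCoalgebraData k C 𝒞) :
    ((Coalgebra.counit (R := k) (A := C)) ∘ₗ (𝒞 0).subtype) ∘ₗ proj k C 𝒞 0 =
      Coalgebra.counit :=
  comp_subtype_comp_proj _ _ fun m hm x hx => D.hcounit m (Nat.one_le_iff_ne_zero.2 hm) x hx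

/-- `(ε ⊗ id) ∘ Δ_{0,n}` is the canonical isomorphism `Cₙ ≃ k ⊗ Cₙ`. -/
lemma inj_zero_left (D : GradedCoalgebraData k C 𝒞) (n : ℕ) : Inj D 0 n := by
  intro x hx h0
  rw [zero_add] at hx
  have h : LinearMap.rTensor (𝒞 n) (Coalgebra.counit ∘ₗ (𝒞 0).subtype) ∘ₗ D.Δc 0 n =
      LinearMap.lTensor k (proj k C 𝒞 n) ∘ₗ
        LinearMap.rTensor C Coalgebra.counit ∘ₗ Coalgebra.comul := by
    rw [Δc_eq, ← LinearMap.comp_assoc, ← LinearMap.comp_assoc, LinearMap.rTensor_comp_map,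
      counit_factor D, LinearMap.lTensor_comp_rTensor]
  have h' := LinearMap.congr_fun h x
  simp only [LinearMap.comp_apply, h0, map_zero, Coalgebra.rTensor_counit_comul,
    LinearMap.lTensor_tmul] at h'
  have h'' := congrArg (TensorProduct.lid k (𝒞 n)) h'
  rw [proj_coe n ⟨x, hx⟩] at h''
  simpa using h''.symm

/-- `(id ⊗ ε) ∘ Δ_{n,0}` is the canonical isomorphism `Cₙ ≃ Cₙ ⊗ k`. -/
lemma inj_zero_right (D : GradedCoalgebraData k C 𝒞) (n : ℕ) : Inj D n 0 := by
  intro x hx h0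
  rw [add_zero] at hx
  have h : LinearMap.lTensor (𝒞 n) (Coalgebra.counit ∘ₗ (𝒞 0).subtype) ∘ₗ D.Δc n 0 =
      LinearMap.rTensor k (proj k C 𝒞 n) ∘ₗ
        LinearMap.lTensor C Coalgebra.counit ∘ₗ Coalgebra.comul := by
    rw [Δc_eq, ← LinearMap.comp_assoc, ← LinearMap.comp_assoc, LinearMap.lTensor_comp_map,
      counit_factor D, LinearMap.rTensor_comp_lTensor]
  have h' := LinearMap.congr_fun h x
  simp only [LinearMap.comp_apply, h0, map_zero, Coalgebra.lTensor_counit_comul,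
    LinearMap.rTensor_tmul] at h'
  have h'' := congrArg (TensorProduct.rid k (𝒞 n)) h'
  rw [proj_coe n ⟨x, hx⟩] at h''
  simpa using h''.symm

lemma inj_of_one_left (D : GradedCoalgebraData k C 𝒞) (h : ∀ n, 1 ≤ n → Inj D 1 n) (p q : ℕ) :
    Inj D p q := by
  have h1 : ∀ n, Inj D 1 n := fun n =>
    n.eq_zero_or_pos.elim (fun hn => hn ▸ inj_zero_right D 1) (h n)
  induction p with
  | zero => exact inj_zero_left D q
  | succ p ih => exact add_comm 1 p ▸ inj_left D (h1 (p + q)) ih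

lemma inj_of_one_right (D : GradedCoalgebraData k C 𝒞) (h : ∀ n, 1 ≤ n → Inj D n 1) (p q : ℕ) :
    Inj D p q := by
  have h1 : ∀ n, Inj D n 1 := fun n =>
    n.eq_zero_or_pos.elim (fun hn => hn ▸ inj_zero_left D 1) (h n)
  induction q with
  | zero => exact inj_zero_right D p
  | succ q ih => exact inj_right D (h1 (p + q)) ih

lemma deltaIter_add_two (D : GradedCoalgebraData k C 𝒞) (n : ℕ) (x : C) :
    deltaIter k C 𝒞 D (n + 2) x = LinearMap.lTensor (𝒞 1)
      (deltaIter k C 𝒞 D (n + 1) ∘ₗ (𝒞 (n + 1)).subtype) (D.Δc 1 (n + 1) x) :=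
  rfl

lemma deltaIter_injective (D : GradedCoalgebraData k C 𝒞) (h : ∀ n, 1 ≤ n → Inj D 1 n) (n : ℕ) :
    ∀ x ∈ 𝒞 (n + 1), deltaIter k C 𝒞 D (n + 1) x = 0 → x = 0 := by
  induction n with
  | zero =>
    intro x hx h0
    have h0' : proj k C 𝒞 1 x = 0 := h0
    rw [proj_coe 1 ⟨x, hx⟩] at h0'
    exact congrArg Subtype.val h0'
  | succ n ih =>
    intro x hx h0
    rw [deltaIter_add_two] at h0
    refine h (n + 1) (by omega) x (by rwa [add_comm 1]) ?_
    exact (injective_iff_map_eq_zero _).1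
      (Module.Flat.lTensor_preserves_injective_linearMap _ (injective_restrict ih)) _ h0

variable (k C 𝒞)

/-- For a connected graded `k`-coalgebra `C`, with `Δⁿ : Cₙ → C₁^{⊗n}` the
iterated comultiplication, the following are equivalent:
(i) `C` is strongly graded (all `Δ_{p,q}` injective);
(ii) `Δⁿ` is injective for all `n ≥ 2`;
(iii) `Δ_{1,n}` is injective for all `n ≥ 1`;
(iv) `Δ_{n,1}` is injective for all `n ≥ 1`. -/
theorem statement3 (D : GradedCoalgebraData k C 𝒞) :
    List.TFAE [
      ∀ p q : ℕ, ∀ x ∈ 𝒞 (p + q), D.Δc p q x = 0 → x = 0,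
      ∀ n : ℕ, 2 ≤ n → ∀ x ∈ 𝒞 n, deltaIter k C 𝒞 D n x = 0 → x = 0,
      ∀ n : ℕ, 1 ≤ n → ∀ x ∈ 𝒞 (1 + n), D.Δc 1 n x = 0 → x = 0,
      ∀ n : ℕ, 1 ≤ n → ∀ x ∈ 𝒞 (n + 1), D.Δc n 1 x = 0 → x = 0 ] := by
  tfae_have 1 → 3 := fun h n _ => h 1 n
  tfae_have 1 → 4 := fun h n _ => h n 1
  tfae_have 3 → 1 := inj_of_one_left D
  tfae_have 4 → 1 := inj_of_one_right D
  tfae_have 3 → 2 := by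
    intro h n hn
    obtain ⟨m, rfl⟩ : ∃ m, n = m + 1 := ⟨n - 1, by omega⟩
    exact deltaIter_injective D h m
  tfae_have 2 → 3 := by
    intro h n hn x hx h0
    obtain ⟨m, rfl⟩ : ∃ m, n = m + 1 := ⟨n - 1, by omega⟩
    refine h (m + 2) (by omega) x (by rwa [add_comm 1] at hx) ?_
    rw [deltaIter_add_two, h0, map_zero]
    rfl
  tfae_finish

end Koszul
end
end

section
/- Let π : B → A be a morphism of connected strongly graded k-algebras (a k-algebra homomorphism with π(Bⁿ) ⊆ Aⁿ for all n). Let m ≥ 2 be such that the components πⁱ : Bⁱ → Aⁱ are bijective for all 0 ≤ i < m and Tor^A_{2,m}(k,k) = 0. Then πᵐ : Bᵐ → Aᵐ is bijective. -/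
/-!
Surjectivity of `πᵐ` holds because `A` is generated in degree one and `π¹` is surjective.

For injectivity, let `σ : A → B` be the linear map inverting `π` in degrees `< m` and vanishing in
degrees `≥ m` (`lowInv`). Since `π` is multiplicative, `σ (a a') = σ a σ a'` whenever `a`, `a'` are
homogeneous with degrees adding up to less than `m` (`lowInv_mul`). Hence the map
`Φ (a ⊗ a') = σ a σ a'` from `A ⊗ A` to `B` kills the boundary `aa' ⊗ a'' - a ⊗ a'a''` of every
three-fold tensor of positive degrees of total degree `m` (`lowMul_barD_three`). If `x ∈ Bᵐ` and
`π x = 0`, write `x = ∑ bᵢ cᵢ` with `bᵢ ∈ B¹`, `cᵢ ∈ Bᵐ⁻¹`. The tensor `∑ π bᵢ ⊗ π cᵢ` is a 2-cycle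
of degree `m` which `Φ` sends to `x`; as `Tor_{2,m} = 0` it is a boundary, so `x = 0`.
-/


open TensorProduct

noncomputable section
namespace Koszul

variable (k : Type) [Field k]

variable (A : Type) [Ring A] [Algebra k A]

/-- `contract n i` multiplies the `(i+1)`-st and `(i+2)`-nd tensor factors of `A^{⊗(n+2)}`. -/
def contract : (n i : ℕ) → (↥(TP k A (n+2)) →ₗ[k] ↥(TP k A (n+1)))
  | 0, 0 => LinearMap.mul' k A
  | 0, (_+1) => 0
  | (n+1), 0 =>
      (TensorProduct.map (LinearMap.mul' k A) LinearMap.id).comp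
        (TensorProduct.assoc k A A ↥(TP k A (n+1))).symm.toLinearMap
  | (n+1), (i+1) => LinearMap.lTensor A (contract n i)

/-- The differential of the normalized bar complex,
`d(a₁⊗⋯⊗aₙ) = Σ_{i=1}^{n-1} (-1)^{i-1} a₁⊗⋯⊗aᵢaᵢ₊₁⊗⋯⊗aₙ`. -/
def barD : (n : ℕ) → (↥(TP k A n) →ₗ[k] ↥(TP k A (n-1)))
  | 0 => 0
  | 1 => 0
  | (n+2) => ∑ i ∈ Finset.range (n+1), ((-1:k)^i) • contract k A n i

variable (𝒜 : ℕ → Submodule k A)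

/-- `Tor^A_{n,m}(k,k) = Ker dₙᵐ / Im dₙ₊₁ᵐ`, computed from the degree-`m` part of the
normalized bar complex. -/
abbrev Tor (n m : ℕ) : Type :=
  ↥(LinearMap.ker (barD k A n) ⊓ omega k 𝒜 n m) ⧸
    (Submodule.comap (LinearMap.ker (barD k A n) ⊓ omega k 𝒜 n m).subtype
      (Submodule.map (barD k A (n+1)) (omega k 𝒜 (n+1) m)))

variable (B : Type) [Ring B] [Algebra k B]

section LowInverse

variable {k A B} {𝒜}
variable {ℬ : ℕ → Submodule k B} {π : B →ₐ[k] A} {m : ℕ}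

open Classical in
/-- The linear map `A → B` which inverts `π` in those degrees `i < m` where `πⁱ` is bijective, and
which is zero on all other homogeneous components of `A`. -/
def lowInv [GradedAlgebra 𝒜] (hπ : ∀ n : ℕ, ∀ x ∈ ℬ n, π x ∈ 𝒜 n) (m : ℕ) : A →ₗ[k] B :=
  (DirectSum.toModule k ℕ B (fun i =>
    if h : i < m ∧ Function.Bijective (π.toLinearMap.restrict (hπ i)) then
      (ℬ i).subtype ∘ₗ (LinearEquiv.ofBijective _ h.2).symm.toLinearMap
    else 0)) ∘ₗ (DirectSum.decomposeLinearEquiv 𝒜).toLinearMap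

lemma lowInv_apply [GradedAlgebra 𝒜] (hπ : ∀ n : ℕ, ∀ x ∈ ℬ n, π x ∈ 𝒜 n)
    (hbij : ∀ i : ℕ, i < m →
      Function.Bijective (fun x : ↥(ℬ i) => (⟨π x, hπ i x x.2⟩ : ↥(𝒜 i))))
    {i : ℕ} (hi : i < m) {b : B} (hb : b ∈ ℬ i) : lowInv hπ m (π b) = b := by
  have hbi : Function.Bijective (π.toLinearMap.restrict (hπ i)) := hbij i hi
  have hdec : DirectSum.decomposeLinearEquiv 𝒜 (π b)
      = DirectSum.lof k ℕ (fun i => 𝒜 i) i ⟨π b, hπ i b hb⟩ :=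
    DirectSum.decompose_of_mem 𝒜 (hπ i b hb)
  have hsymm : (LinearEquiv.ofBijective _ hbi).symm ⟨π b, hπ i b hb⟩ = ⟨b, hb⟩ := by
    rw [LinearEquiv.symm_apply_eq]
    rfl
  rw [lowInv, LinearMap.comp_apply, LinearEquiv.coe_coe, hdec, DirectSum.toModule_lof,
    dif_pos ⟨hi, hbi⟩, LinearMap.comp_apply, LinearEquiv.coe_coe, hsymm]
  rfl

lemma exists_preimage {hπ : ∀ n : ℕ, ∀ x ∈ ℬ n, π x ∈ 𝒜 n}
    (hbij : ∀ i : ℕ, i < m →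
      Function.Bijective (fun x : ↥(ℬ i) => (⟨π x, hπ i x x.2⟩ : ↥(𝒜 i))))
    {i : ℕ} (hi : i < m) {a : A} (ha : a ∈ 𝒜 i) : ∃ b ∈ ℬ i, π b = a := by
  obtain ⟨b, hb⟩ := (hbij i hi).2 ⟨a, ha⟩
  exact ⟨b, b.2, congrArg Subtype.val hb⟩

lemma lowInv_mul [GradedAlgebra 𝒜] [GradedAlgebra ℬ] (hπ : ∀ n : ℕ, ∀ x ∈ ℬ n, π x ∈ 𝒜 n)
    (hbij : ∀ i : ℕ, i < m →
      Function.Bijective (fun x : ↥(ℬ i) => (⟨π x, hπ i x x.2⟩ : ↥(𝒜 i))))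
    {p q : ℕ} (hpq : p + q < m) {a a' : A} (ha : a ∈ 𝒜 p) (ha' : a' ∈ 𝒜 q) :
    lowInv hπ m (a * a') = lowInv hπ m a * lowInv hπ m a' := by
  obtain ⟨b, hb, rfl⟩ := exists_preimage hbij (by omega : p < m) ha
  obtain ⟨b', hb', rfl⟩ := exists_preimage hbij (by omega : q < m) ha'
  rw [← map_mul, lowInv_apply hπ hbij hpq (SetLike.mul_mem_graded hb hb'),
    lowInv_apply hπ hbij (by omega : p < m) hb, lowInv_apply hπ hbij (by omega : q < m) hb']

/-- The linear map `Φ : A ⊗ A → B`, `a ⊗ a' ↦ σ a * σ a'`, where `σ = lowInv hπ m`. -/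
def lowMul [GradedAlgebra 𝒜] (hπ : ∀ n : ℕ, ∀ x ∈ ℬ n, π x ∈ 𝒜 n) (m : ℕ) :
    ↥(TP k A 2) →ₗ[k] B :=
  ((LinearMap.mul' k B) ∘ₗ (TensorProduct.map (lowInv hπ m) (lowInv hπ m)) : A ⊗[k] A →ₗ[k] B)

/-- The pure tensor `a ⊗ a'`, as an element of `TP k A 2`. -/
def tmul₂ (a a' : A) : ↥(TP k A 2) := (a ⊗ₜ[k] a' : A ⊗[k] A)

/-- Tensoring with `a` on the left, as a linear map `TP k A 2 → TP k A 3`. -/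
def tmulLeft (a : A) : ↥(TP k A 2) →ₗ[k] ↥(TP k A 3) :=
  TensorProduct.mk k A ↥(TP k A 2) a

lemma lowMul_tmul₂ [GradedAlgebra 𝒜] (hπ : ∀ n : ℕ, ∀ x ∈ ℬ n, π x ∈ 𝒜 n) (a a' : A) :
    lowMul hπ m (tmul₂ a a') = lowInv hπ m a * lowInv hπ m a' := rfl

lemma barD_two (a a' : A) : barD k A 2 (tmul₂ a a') = (a * a' : A) := by
  change (∑ i ∈ Finset.range 1, ((-1:k)^i) • contract k A 0 i) (tmul₂ a a') = (a * a' : A)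
  rw [Finset.sum_range_one, pow_zero, one_smul]
  rfl

lemma barD_three (a b c : A) :
    barD k A 3 (tmulLeft a (tmul₂ b c)) = tmul₂ (a * b) c - tmul₂ a (b * c) := by
  change (∑ i ∈ Finset.range 2, ((-1:k)^i) • contract k A 1 i) (tmulLeft a (tmul₂ b c)) = _
  rw [Finset.sum_range_succ, Finset.sum_range_one, pow_zero, pow_one, one_smul, neg_one_smul,
    ← sub_eq_add_neg]
  rfl

lemma range_map_subtype_le {V W : Type} [AddCommGroup V] [Module k V] [AddCommGroup W]
    [Module k W] {S : Submodule k V} {T : Submodule k W} {N : Submodule k (V ⊗[k] W)}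
    (h : ∀ v ∈ S, ∀ w ∈ T, v ⊗ₜ[k] w ∈ N) :
    LinearMap.range (TensorProduct.map S.subtype T.subtype) ≤ N := by
  rintro _ ⟨t, rfl⟩
  induction t using TensorProduct.induction_on with
  | zero => rw [map_zero]; exact N.zero_mem
  | add x y hx hy => rw [map_add]; exact N.add_mem hx hy
  | tmul v w => exact h v v.2 w w.2

/-- To show `omega 2 m ≤ N` it suffices to check pure tensors of positive bidegree. -/
lemma omega_two_le {m : ℕ} {N : Submodule k ↥(TP k A 2)}
    (h : ∀ p q : ℕ, 1 ≤ p → 1 ≤ q → p + q = m → ∀ a ∈ 𝒜 p, ∀ b ∈ 𝒜 q, tmul₂ a b ∈ N) :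
    omega k 𝒜 2 m ≤ N := by
  refine iSup₂_le fun p hp => ?_
  rw [Finset.mem_Icc] at hp
  refine range_map_subtype_le (V := A) (W := A) (N := N)
    (T := if m - p = 0 then (⊥ : Submodule k A) else 𝒜 (m - p)) fun a ha b hb => ?_
  split_ifs at hb with hq
  · rw [(Submodule.mem_bot k).1 hb, TensorProduct.tmul_zero]
    exact N.zero_mem
  · exact h p (m - p) hp.1 (by omega) (by omega) a ha b hb

/-- To show `omega 3 m ≤ N` it suffices to check pure tensors of positive tridegree. -/
lemma omega_three_le {m : ℕ} {N : Submodule k ↥(TP k A 3)}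
    (h : ∀ p q r : ℕ, 1 ≤ p → 1 ≤ q → 1 ≤ r → p + q + r = m →
      ∀ a ∈ 𝒜 p, ∀ b ∈ 𝒜 q, ∀ c ∈ 𝒜 r, tmulLeft a (tmul₂ b c) ∈ N) :
    omega k 𝒜 3 m ≤ N := by
  refine iSup₂_le fun p hp => ?_
  rw [Finset.mem_Icc] at hp
  refine range_map_subtype_le (V := A) (W := ↥(TP k A 2)) (N := N) fun a ha w hw => ?_
  have hle : omega k 𝒜 2 (m - p) ≤ N.comap (tmulLeft a) :=
    omega_two_le fun q r hq hr hqr b hb c hc =>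
      h p q r hp.1 hq hr (by omega) a ha b hb c hc
  exact hle hw

lemma tmul₂_mem_omega {p q : ℕ} (hp : 1 ≤ p) (hq : 1 ≤ q) {a b : A} (ha : a ∈ 𝒜 p)
    (hb : b ∈ 𝒜 q) : tmul₂ a b ∈ omega k 𝒜 2 (p + q) := by
  have hb' : b ∈ omega k 𝒜 1 (p + q - p) := by
    change b ∈ (if p + q - p = 0 then (⊥ : Submodule k A) else 𝒜 (p + q - p))
    rw [if_neg (by omega), Nat.add_sub_cancel_left]
    exact hb
  refine Submodule.mem_iSup_of_mem p (Submodule.mem_iSup_of_mem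
    (Finset.mem_Icc.2 ⟨hp, by omega⟩) ?_)
  exact ⟨(⟨a, ha⟩ : 𝒜 p) ⊗ₜ[k] (⟨b, hb'⟩ : omega k 𝒜 1 (p + q - p)), rfl⟩

/-- `Φ` vanishes on the boundaries in `Ω₂(A, m)`: the two terms of the boundary of `a ⊗ b ⊗ c` both
map to `σ a * σ b * σ c`, because `ab` and `bc` have degree `< m`. -/
lemma lowMul_barD_three [GradedAlgebra 𝒜] [GradedAlgebra ℬ]
    (hπ : ∀ n : ℕ, ∀ x ∈ ℬ n, π x ∈ 𝒜 n)
    (hbij : ∀ i : ℕ, i < m →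
      Function.Bijective (fun x : ↥(ℬ i) => (⟨π x, hπ i x x.2⟩ : ↥(𝒜 i))))
    {η : ↥(TP k A 3)} (hη : η ∈ omega k 𝒜 3 m) : lowMul hπ m (barD k A 3 η) = 0 := by
  have hle : omega k 𝒜 3 m ≤ LinearMap.ker ((lowMul hπ m).comp (barD k A 3)) := by
    refine omega_three_le fun p q r hp hq hr hpqr a ha b hb c hc => ?_
    rw [LinearMap.mem_ker]
    change lowMul hπ m (barD k A 3 (tmulLeft a (tmul₂ b c))) = 0
    rw [barD_three]
    refine (map_sub (lowMul hπ m) _ _).trans ?_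
    rw [lowMul_tmul₂, lowMul_tmul₂, lowInv_mul hπ hbij (by omega) ha hb,
      lowInv_mul hπ hbij (by omega) hb hc, mul_assoc, sub_self]
  exact hle hη

/-- Every element `x` of `B¹ · Bᵐ⁻¹` lifts to an element of `Ω₂(A, m)` with boundary `π x` and with
image `x` under `Φ`. -/
lemma exists_lift [GradedAlgebra 𝒜]
    (hπ : ∀ n : ℕ, ∀ x ∈ ℬ n, π x ∈ 𝒜 n) (hm : 2 ≤ m)
    (hbij : ∀ i : ℕ, i < m →
      Function.Bijective (fun x : ↥(ℬ i) => (⟨π x, hπ i x x.2⟩ : ↥(𝒜 i))))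
    {x : B} (hx : x ∈ ℬ 1 * ℬ (m - 1)) :
    ∃ w ∈ omega k 𝒜 2 m, barD k A 2 w = π x ∧ lowMul hπ m w = x := by
  induction hx using Submodule.mul_induction_on' with
  | mem_mul_mem b hb c hc =>
    refine ⟨tmul₂ (π b) (π c), ?_, ?_, ?_⟩
    · have := tmul₂_mem_omega (k := k) (p := 1) (q := m - 1) le_rfl (by omega)
        (hπ _ b hb) (hπ _ c hc)
      rwa [show 1 + (m - 1) = m by omega] at this
    · rw [barD_two, map_mul]
    · rw [lowMul_tmul₂, lowInv_apply hπ hbij (by omega) hb, lowInv_apply hπ hbij (by omega) hc]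
  | add x _ y _ hx hy =>
    obtain ⟨v, hv, hv₁, hv₂⟩ := hx
    obtain ⟨w, hw, hw₁, hw₂⟩ := hy
    refine ⟨v + w, add_mem hv hw, ?_, ?_⟩
    · rw [map_add π, ← hv₁, ← hw₁]
      exact map_add (barD k A 2) v w
    · rw [map_add, hv₂, hw₂]

end LowInverse

/-- **Statement 5.** Let `π : B → A` be a morphism of connected strongly graded `k`-algebras
whose components `πⁱ : Bⁱ → Aⁱ` are bijective for `0 ≤ i < m`, where `m ≥ 2`.
If `Tor^A_{2,m}(k,k) = 0` then `πᵐ : Bᵐ → Aᵐ` is bijective. -/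
theorem statement5 [GradedAlgebra 𝒜] (hA0 : 𝒜 0 = 1)
    (hAstrong : ∀ n : ℕ, 1 ≤ n → 𝒜 n = 𝒜 1 ^ n)
    (ℬ : ℕ → Submodule k B) [GradedAlgebra ℬ] (hB0 : ℬ 0 = 1)
    (hBstrong : ∀ n : ℕ, 1 ≤ n → ℬ n = ℬ 1 ^ n)
    (π : B →ₐ[k] A) (hπ : ∀ n : ℕ, ∀ x ∈ ℬ n, π x ∈ 𝒜 n)
    (m : ℕ) (hm : 2 ≤ m)
    (hbij : ∀ i : ℕ, i < m →
      Function.Bijective (fun x : ↥(ℬ i) => (⟨π x, hπ i x x.2⟩ : ↥(𝒜 i))))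
    (htor : Subsingleton (Tor k A 𝒜 2 m)) :
    Function.Bijective (fun x : ↥(ℬ m) => (⟨π x, hπ m x x.2⟩ : ↥(𝒜 m))) := by
  refine ⟨?_, ?_⟩
  · have key : ∀ x ∈ ℬ m, π x = 0 → x = 0 := by
      intro x hx hx0
      have hx' : x ∈ ℬ 1 * ℬ (m - 1) := by
        rw [hBstrong (m - 1) (by omega), ← pow_succ', show m - 1 + 1 = m by omega,
          ← hBstrong m (by omega)]
        exact hx
      obtain ⟨w, hw, hw₁, hw₂⟩ := exists_lift hπ hm hbij hx'
      have hcycle : w ∈ LinearMap.ker (barD k A 2) ⊓ omega k 𝒜 2 m :=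
        ⟨LinearMap.mem_ker.2 (hw₁.trans hx0), hw⟩
      have htop := Submodule.Quotient.subsingleton_iff.1 htor
      have hbd : (⟨w, hcycle⟩ : ↥(LinearMap.ker (barD k A 2) ⊓ omega k 𝒜 2 m)) ∈
          Submodule.comap (LinearMap.ker (barD k A 2) ⊓ omega k 𝒜 2 m).subtype
            (Submodule.map (barD k A 3) (omega k 𝒜 3 m)) := by
        rw [htop]
        exact Submodule.mem_top
      obtain ⟨η, hη, hηw⟩ := hbd
      have h0 : lowMul hπ m w = 0 := by
        have h := lowMul_barD_three hπ hbij hη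
        rw [hηw] at h
        exact h
      rw [← hw₂, h0]
    intro x y hxy
    have hxy' : π x = π y := congrArg Subtype.val hxy
    refine Subtype.ext (sub_eq_zero.1 (key _ (sub_mem x.2 y.2) ?_))
    rw [map_sub, hxy', sub_self]
  · rintro ⟨a, ha⟩
    have h1 : 𝒜 1 ≤ (ℬ 1).map π.toLinearMap := fun a ha => by
      obtain ⟨b, hb, rfl⟩ := exists_preimage hbij (by omega : 1 < m) ha
      exact ⟨b, hb, rfl⟩
    have ha' : a ∈ (ℬ m).map π.toLinearMap := by
      rw [hBstrong m (by omega), Submodule.map_pow]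
      rw [hAstrong m (by omega)] at ha
      exact pow_le_pow_left' h1 m ha
    obtain ⟨b, hb, hba⟩ := ha'
    exact ⟨⟨b, hb⟩, Subtype.ext hba⟩

end Koszul
end
end

section
/- Let C be a connected strongly graded k-coalgebra with C₀ = k·g, and let (X, ρ) be a graded right C-comodule. Then for every m ≥ 1, the set {x ∈ X_m : ρ(x) = x ⊗ g} equals ⋂_{i=0}^{m−1} Ker(ρ_{i,m−i}) and also equals Ker(ρ_{m−1,1} : X_m → X_{m−1} ⊗ C₁). -/
/-!
The components of a graded coaction are recovered from the coaction itself: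
`ρ_{p,q} = (π_p ⊗ π_q) ∘ ρ`, where `π` denotes projection to a homogeneous component
(`component_eq`); the same holds for `Δ`.

If `ρ(x) = x ⊗ g` with `x ∈ Xₘ`, projecting kills every component with `i < m`. If all these
components vanish, only the `X_m ⊗ C₀` part remains, so `ρ(x) = y ⊗ g` for some `y`, and the
counit law gives `y = x`. The main point is that `ρ_{m-1,1}(x) = 0` forces all the other
components to vanish: projecting coassociativity to `X_i ⊗ C_a ⊗ C_1` with `i + a + 1 = m` gives
`(ρ_{i,a} ⊗ id) ρ_{m-1,1}(x) = (id ⊗ Δ_{a,1}) ρ_{i,a+1}(x)`, and `id ⊗ Δ_{a,1}` is injective because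
`Δ_{a,1}` is injective on `C_{a+1}` and `k` is a field (`component_eq_zero`).
-/

open TensorProduct

noncomputable section
namespace Koszul

variable (k : Type) [Field k]
variable (C : Type) [AddCommGroup C] [Module k C] [Coalgebra k C]
variable (𝒞 : ℕ → Submodule k C)

/-- The data of a graded right `C`-comodule structure on `X = ⊕ₙ Xₙ`: a counital and
coassociative coaction `ρ` together with its components `ρc p q : X_{p+q} → X_p ⊗ C_q`
(extended by `0` to the other homogeneous components of `X`). -/
structure GradedComoduleData (X : Type) [AddCommGroup X] [Module k X]
    (𝒳 : ℕ → Submodule k X) where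
  ρ : X →ₗ[k] X ⊗[k] C
  ρc : ∀ p q : ℕ, X →ₗ[k] (↥(𝒳 p) ⊗[k] ↥(𝒞 q))
  coassoc : ∀ x, (LinearMap.rTensor C ρ) (ρ x) =
    (TensorProduct.assoc k X C C).symm
      ((LinearMap.lTensor X (Coalgebra.comul (R := k))) (ρ x))
  counit_law : ∀ x,
    (TensorProduct.rid k X) ((LinearMap.lTensor X (Coalgebra.counit (R := k))) (ρ x)) = x
  hρc : ∀ n, ∀ x ∈ 𝒳 n, ρ x =
    ∑ p ∈ Finset.range (n+1),
      (TensorProduct.map (𝒳 p).subtype (𝒞 (n-p)).subtype) (ρc p (n-p) x)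
  hρc0 : ∀ p q n, n ≠ p + q → ∀ x ∈ 𝒳 n, ρc p q x = 0

section Projection

variable {k}
variable {M A B : Type} [AddCommGroup M] [Module k M] [AddCommGroup A] [Module k A]
  [AddCommGroup B] [Module k B]
variable (ℳ : ℕ → Submodule k M) (𝒜 : ℕ → Submodule k A) (ℬ : ℕ → Submodule k B)
  [DirectSum.Decomposition ℳ] [DirectSum.Decomposition 𝒜] [DirectSum.Decomposition ℬ]

/-- The projection of a graded vector space onto its `i`-th homogeneous component, with values in
the component itself. -/
def hproj (i : ℕ) : M →ₗ[k] ↥(ℳ i) :=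
  DirectSum.component k ℕ (fun j => ↥(ℳ j)) i ∘ₗ (DirectSum.decomposeLinearEquiv ℳ).toLinearMap

lemma hproj_same (i : ℕ) (x : ↥(ℳ i)) : hproj ℳ i x = x :=
  Subtype.ext (DirectSum.decompose_of_mem_same ℳ x.2)

lemma hproj_ne {i j : ℕ} (h : j ≠ i) {x : M} (hx : x ∈ ℳ j) : hproj ℳ i x = 0 :=
  Subtype.ext (DirectSum.decompose_of_mem_ne ℳ hx h)

lemma hproj_comp_subtype_same (i : ℕ) : hproj ℳ i ∘ₗ (ℳ i).subtype = LinearMap.id :=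
  LinearMap.ext fun x => hproj_same ℳ i x

lemma hproj_comp_subtype_ne {i j : ℕ} (h : j ≠ i) : hproj ℳ i ∘ₗ (ℳ j).subtype = 0 :=
  LinearMap.ext fun x => hproj_ne ℳ h x.2

lemma ext_homogeneous {N : Type} [AddCommGroup N] [Module k N] {f f' : M →ₗ[k] N}
    (h : ∀ n, ∀ x ∈ ℳ n, f x = f' x) : f = f' := by
  ext x
  induction x using DirectSum.Decomposition.inductionOn ℳ with
  | zero => simp
  | homogeneous x => exact h _ _ x.2
  | add x y hx hy => simp [hx, hy]

/-- A map vanishing outside degree `n` factors through the projection to degree `n`. -/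
lemma eq_comp_hproj {N : Type} [AddCommGroup N] [Module k N] {f : M →ₗ[k] N} (n : ℕ)
    (h : ∀ j, j ≠ n → ∀ x ∈ ℳ j, f x = 0) :
    f = (f ∘ₗ (ℳ n).subtype) ∘ₗ hproj ℳ n := by
  refine ext_homogeneous ℳ fun j x hx => ?_
  by_cases hj : j = n
  · subst hj
    have := hproj_same ℳ j ⟨x, hx⟩
    simp only at this
    simp [this]
  · simp [h j hj x hx, hproj_ne ℳ hj hx]

/-- The components of a graded map `ρ : M → A ⊗ B` are obtained from `ρ` by projecting. This covers
both the comultiplication and the coaction. -/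
lemma component_eq (ρ : M →ₗ[k] A ⊗[k] B) (ρc : ∀ p q : ℕ, M →ₗ[k] (↥(𝒜 p) ⊗[k] ↥(ℬ q)))
    (h : ∀ n, ∀ x ∈ ℳ n, ρ x = ∑ p ∈ Finset.range (n+1),
      (TensorProduct.map (𝒜 p).subtype (ℬ (n-p)).subtype) (ρc p (n-p) x))
    (h0 : ∀ p q n, n ≠ p + q → ∀ x ∈ ℳ n, ρc p q x = 0) (p q : ℕ) :
    TensorProduct.map (hproj 𝒜 p) (hproj ℬ q) ∘ₗ ρ = ρc p q := by
  have key : ∀ r s x, TensorProduct.map (hproj 𝒜 p) (hproj ℬ q)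
      (TensorProduct.map (𝒜 r).subtype (ℬ s).subtype (ρc r s x)) =
      if r = p ∧ s = q then ρc p q x else 0 := by
    intro r s x
    rw [← LinearMap.comp_apply, ← TensorProduct.map_comp]
    split_ifs with hrs
    · obtain ⟨rfl, rfl⟩ := hrs
      simp [hproj_comp_subtype_same]
    · by_cases hr : r = p
      · have hs : s ≠ q := fun hs => hrs ⟨hr, hs⟩
        simp [hproj_comp_subtype_ne ℬ hs]
      · simp [hproj_comp_subtype_ne 𝒜 hr]
  refine ext_homogeneous ℳ fun n x hx => ?_
  rw [LinearMap.comp_apply, h n x hx, map_sum, Finset.sum_congr rfl fun r _ => key r (n - r) x]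
  by_cases hn : n = p + q
  · subst hn
    rw [Finset.sum_eq_single p]
    · simp
    · intro r _ hr
      simp [hr]
    · intro hp
      simp at hp
  · rw [h0 p q n hn x hx]
    simp

end Projection

/-- If `ρ_{m-1,1}(x) = 0` then `ρ_{i,a+1}(x) = 0` whenever `i + a + 1 = m`; here `i + a` plays the
role of `m - 1`. This is coassociativity together with the injectivity of `id ⊗ Δ_{a,1}`. -/
lemma component_eq_zero [DirectSum.Decomposition 𝒞]
    (D : GradedCoalgebraData k C 𝒞) (hstrong : D.Strong)
    (X : Type) [AddCommGroup X] [Module k X] (𝒳 : ℕ → Submodule k X)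
    [DirectSum.Decomposition 𝒳] (R : GradedComoduleData k C 𝒞 X 𝒳)
    (i a : ℕ) (x : X) (h : R.ρc (i + a) 1 x = 0) : R.ρc i (a + 1) x = 0 := by
  have hρ := component_eq 𝒳 𝒳 𝒞 R.ρ R.ρc R.hρc R.hρc0
  have hΔ := component_eq 𝒞 𝒞 𝒞 (Coalgebra.comul (R := k)) D.Δc D.hΔc D.hΔc0
  have hco := congrArg
    (TensorProduct.map (TensorProduct.map (hproj 𝒳 i) (hproj 𝒞 a)) (hproj 𝒞 1)) (R.coassoc x)
  have hL : (TensorProduct.map (TensorProduct.map (hproj 𝒳 i) (hproj 𝒞 a)) (hproj 𝒞 1))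
      (LinearMap.rTensor C R.ρ (R.ρ x)) = 0 := by
    rw [LinearMap.rTensor, ← LinearMap.comp_apply, ← TensorProduct.map_comp, hρ i a,
      eq_comp_hproj 𝒳 (i + a) (f := R.ρc i a) (fun j hj => R.hρc0 i a j hj),
      LinearMap.comp_id, ← LinearMap.id_comp (hproj 𝒞 1), TensorProduct.map_comp,
      LinearMap.comp_apply, ← LinearMap.comp_apply _ R.ρ, hρ, h, map_zero]
  rw [hL, TensorProduct.map_map_assoc_symm, eq_comm, LinearEquiv.map_eq_zero_iff, LinearMap.lTensor, ← LinearMap.comp_apply,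
    ← TensorProduct.map_comp, hΔ a 1,
    eq_comp_hproj 𝒞 (a + 1) (f := D.Δc a 1) (fun j hj => D.hΔc0 a 1 j hj),
    LinearMap.comp_id, ← LinearMap.id_comp (hproj 𝒳 i), TensorProduct.map_comp,
    LinearMap.comp_apply, ← LinearMap.comp_apply _ R.ρ, hρ] at hco
  have hinj : Function.Injective (D.Δc a 1 ∘ₗ (𝒞 (a + 1)).subtype) := by
    rw [injective_iff_map_eq_zero]
    intro c hc
    exact Subtype.ext (hstrong a 1 c c.2 hc)
  exact (injective_iff_map_eq_zero _).1
    (Module.Flat.lTensor_preserves_injective_linearMap (M := ↥(𝒳 i)) _ hinj) _ hco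

/-- **Statement 10.** Let `C` be a connected strongly graded `k`-coalgebra with `C₀ = k·g`
and `(X, ρ)` a graded right `C`-comodule.  For every `m ≥ 1` and `x ∈ Xₘ`:
`ρ(x) = x ⊗ g` iff all components `ρ_{i,m-i}(x)`, `0 ≤ i ≤ m-1`, vanish, and also
iff the single component `ρ_{m-1,1}(x)` vanishes. -/
theorem statement10 [DirectSum.Decomposition 𝒞]
    (D : GradedCoalgebraData k C 𝒞) (hstrong : D.Strong)
    (X : Type) [AddCommGroup X] [Module k X] (𝒳 : ℕ → Submodule k X)
    [DirectSum.Decomposition 𝒳] (R : GradedComoduleData k C 𝒞 X 𝒳)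
    (m : ℕ) (hm : 1 ≤ m) :
    ∀ x ∈ 𝒳 m,
      ((R.ρ x = x ⊗ₜ[k] D.g ↔ ∀ i : ℕ, i < m → R.ρc i (m - i) x = 0) ∧
       (R.ρ x = x ⊗ₜ[k] D.g ↔ R.ρc (m - 1) 1 x = 0)) := by
  intro x hx
  have h12 : R.ρ x = x ⊗ₜ[k] D.g → ∀ i : ℕ, i < m → R.ρc i (m - i) x = 0 := by
    intro h i hi
    rw [← component_eq 𝒳 𝒳 𝒞 R.ρ R.ρc R.hρc R.hρc0, LinearMap.comp_apply, h,
      TensorProduct.map_tmul, hproj_ne 𝒳 hi.ne' hx, TensorProduct.zero_tmul]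
  have h23 : (∀ i : ℕ, i < m → R.ρc i (m - i) x = 0) → R.ρc (m - 1) 1 x = 0 := by
    intro h
    have h1 := h (m - 1) (by omega)
    rwa [Nat.sub_sub_self hm] at h1
  have h32 : R.ρc (m - 1) 1 x = 0 → ∀ i : ℕ, i < m → R.ρc i (m - i) x = 0 := by
    intro h i hi
    obtain ⟨a, rfl⟩ : ∃ a, m = i + a + 1 := ⟨m - 1 - i, by omega⟩
    have e : i + a + 1 - i = a + 1 := by omega
    rw [e]
    exact component_eq_zero k C 𝒞 D hstrong X 𝒳 R i a x h
  have h21 : (∀ i : ℕ, i < m → R.ρc i (m - i) x = 0) → R.ρ x = x ⊗ₜ[k] D.g := by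
    intro h
    have hsum : R.ρ x = TensorProduct.map (𝒳 m).subtype (𝒞 (m - m)).subtype
        (R.ρc m (m - m) x) := by
      rw [R.hρc m x hx, Finset.sum_range_succ, Finset.sum_eq_zero, zero_add]
      intro i hi
      rw [h i (Finset.mem_range.1 hi), map_zero]
    rw [Nat.sub_self] at hsum
    -- Every tensor in `X_m ⊗ C₀` is of the form `y ⊗ g`, since `g` spans `C₀`.
    have hy : ∀ t : ↥(𝒳 m) ⊗[k] ↥(𝒞 0), ∃ y : X,
        TensorProduct.map (𝒳 m).subtype (𝒞 0).subtype t = y ⊗ₜ[k] D.g := by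
      intro t
      induction t using TensorProduct.induction_on with
      | zero => exact ⟨0, by simp⟩
      | tmul u c =>
        have hc : (c : C) ∈ Submodule.span k {D.g} := D.hC0 ▸ c.2
        obtain ⟨r, hr⟩ := Submodule.mem_span_singleton.1 hc
        refine ⟨r • (u : X), ?_⟩
        simp [← hr, TensorProduct.smul_tmul]
      | add s t hs ht =>
        obtain ⟨y, hy⟩ := hs
        obtain ⟨z, hz⟩ := ht
        exact ⟨y + z, by rw [map_add, hy, hz, TensorProduct.add_tmul]⟩
    obtain ⟨y, hy⟩ := hy (R.ρc m 0 x)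
    rw [hy] at hsum
    have hc := R.counit_law x
    rw [hsum] at hc
    simp only [LinearMap.lTensor_tmul, D.hcu, TensorProduct.rid_tmul, one_smul] at hc
    rw [hsum, hc]
  exact ⟨⟨h12, h21⟩, ⟨fun h => h23 (h12 h), fun h => h21 (h32 h)⟩⟩

end Koszul
end
end

section
/- Let C be a connected strongly graded k-coalgebra, let X and Y be graded right C-comodules, and let f : X → Y be a morphism of graded right C-comodules (a k-linear map with f(Xₙ) ⊆ Yₙ for all n and (f⊗id_C)∘ρ^X = ρ^Y∘f). If X is strongly graded in degree n and the component fₙ : Xₙ → Yₙ is injective, then f is injective. -/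
/-!
A graded map is injective as soon as it is injective on homogeneous elements. A homogeneous
`x ∈ X_{n+q}` in the kernel of `f` satisfies `(f ⊗ id) (ρ x) = 0`, and projecting the first factor
to degree `n` gives `(fₙ ⊗ id) (ρ_{n,q} x) = 0`. Over a field, tensoring preserves the injectivity
of `fₙ` and of `C_q ⊆ C`, so `ρ_{n,q} x = 0`, and `x = 0` because `X` is strongly graded in
degree `n`.
-/

open TensorProduct

noncomputable section
namespace Koszul

variable (k : Type) [Field k]
variable (C : Type) [AddCommGroup C] [Module k C] [Coalgebra k C]
variable (𝒞 : ℕ → Submodule k C)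

/-- The projection of `X = ⊕ₙ Xₙ` onto its homogeneous component of degree `n`. -/
def gradedProj {X : Type} [AddCommGroup X] [Module k X] (𝒳 : ℕ → Submodule k X)
    [DirectSum.Decomposition 𝒳] (n : ℕ) : X →ₗ[k] ↥(𝒳 n) :=
  DirectSum.component k ℕ (fun i => ↥(𝒳 i)) n ∘ₗ (DirectSum.decomposeLinearEquiv 𝒳).toLinearMap

theorem gradedProj_apply {X : Type} [AddCommGroup X] [Module k X] (𝒳 : ℕ → Submodule k X)
    [DirectSum.Decomposition 𝒳] (n : ℕ) (x : X) :
    gradedProj k 𝒳 n x = DirectSum.decompose 𝒳 x n := rfl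

theorem gradedProj_comp_subtype_self {X : Type} [AddCommGroup X] [Module k X]
    (𝒳 : ℕ → Submodule k X) [DirectSum.Decomposition 𝒳] (n : ℕ) :
    gradedProj k 𝒳 n ∘ₗ (𝒳 n).subtype = LinearMap.id := by
  ext x
  simp [gradedProj_apply]

theorem gradedProj_comp_subtype_of_ne {X : Type} [AddCommGroup X] [Module k X]
    (𝒳 : ℕ → Submodule k X) [DirectSum.Decomposition 𝒳] {n p : ℕ} (h : p ≠ n) :
    gradedProj k 𝒳 n ∘ₗ (𝒳 p).subtype = 0 := by
  ext x
  exact DirectSum.decompose_of_mem_ne 𝒳 x.2 h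

theorem gradedProj_map {X Y : Type} [AddCommGroup X] [Module k X] [AddCommGroup Y] [Module k Y]
    (𝒳 : ℕ → Submodule k X) [DirectSum.Decomposition 𝒳]
    (𝒴 : ℕ → Submodule k Y) [DirectSum.Decomposition 𝒴] (f : X →ₗ[k] Y)
    (hf : ∀ i : ℕ, ∀ x ∈ 𝒳 i, f x ∈ 𝒴 i) (n : ℕ) (x : X) :
    (gradedProj k 𝒴 n (f x) : Y) = f (gradedProj k 𝒳 n x) := by
  simp only [gradedProj_apply]
  induction x using DirectSum.Decomposition.inductionOn 𝒳 with
  | zero => simp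
  | @homogeneous i m =>
    by_cases h : i = n
    · subst h
      rw [DirectSum.decompose_of_mem_same 𝒴 (hf _ _ m.2),
        DirectSum.decompose_of_mem_same 𝒳 m.2]
    · rw [DirectSum.decompose_of_mem_ne 𝒴 (hf _ _ m.2) h,
        DirectSum.decompose_of_mem_ne 𝒳 m.2 h, map_zero]
  | add a b ha hb => simp [DirectSum.decompose_add, ha, hb]

/-- Projecting the first tensor factor of `ρ x` to degree `n` recovers `ρ_{n,q} x`. -/
theorem rTensor_gradedProj_coaction {X : Type} [AddCommGroup X] [Module k X]
    (𝒳 : ℕ → Submodule k X) [DirectSum.Decomposition 𝒳] (R : GradedComoduleData k C 𝒞 X 𝒳)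
    (n q : ℕ) (x : X) (hx : x ∈ 𝒳 (n + q)) :
    (gradedProj k 𝒳 n).rTensor C (R.ρ x) =
      (𝒞 q).subtype.lTensor (↥(𝒳 n)) (R.ρc n q x) := by
  have key : ∀ (p r : ℕ) (t : ↥(𝒳 p) ⊗[k] ↥(𝒞 r)),
      (gradedProj k 𝒳 n).rTensor C (TensorProduct.map (𝒳 p).subtype (𝒞 r).subtype t) =
        TensorProduct.map (gradedProj k 𝒳 n ∘ₗ (𝒳 p).subtype) (𝒞 r).subtype t := by
    intro p r t
    rw [← LinearMap.comp_apply, LinearMap.rTensor_comp_map]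
  rw [R.hρc _ x hx, map_sum, Finset.sum_eq_single n]
  · rw [key, gradedProj_comp_subtype_self, Nat.add_sub_cancel_left]
    rfl
  · intro p _ hp
    rw [key, gradedProj_comp_subtype_of_ne k 𝒳 hp, TensorProduct.map_zero_left,
      LinearMap.zero_apply]
  · intro h
    exact absurd (Finset.mem_range.mpr (by omega)) h

/-- **Statement 12.** Let `C` be a connected strongly graded `k`-coalgebra, `X`, `Y` graded
right `C`-comodules and `f : X → Y` a morphism of graded right `C`-comodules.  If `X` is
strongly graded in degree `n` and the component `fₙ : Xₙ → Yₙ` is injective, then `f` is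
injective. -/
theorem statement12 [DirectSum.Decomposition 𝒞]
    (D : GradedCoalgebraData k C 𝒞) (hstrong : D.Strong)
    (X : Type) [AddCommGroup X] [Module k X] (𝒳 : ℕ → Submodule k X)
    [DirectSum.Decomposition 𝒳] (RX : GradedComoduleData k C 𝒞 X 𝒳)
    (Y : Type) [AddCommGroup Y] [Module k Y] (𝒴 : ℕ → Submodule k Y)
    [DirectSum.Decomposition 𝒴] (RY : GradedComoduleData k C 𝒞 Y 𝒴)
    (f : X →ₗ[k] Y)
    (hfgr : ∀ i : ℕ, ∀ x ∈ 𝒳 i, f x ∈ 𝒴 i)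
    (hfcolin : ∀ x : X, RY.ρ (f x) = (LinearMap.rTensor C f) (RX.ρ x))
    (n : ℕ)
    (hXlow : ∀ i : ℕ, i < n → 𝒳 i = ⊥)
    (hXstrong : ∀ q : ℕ, ∀ x ∈ 𝒳 (n + q), RX.ρc n q x = 0 → x = 0)
    (hfn : ∀ x ∈ 𝒳 n, f x = 0 → x = 0) :
    Function.Injective f := by
  have hom : ∀ i : ℕ, ∀ x ∈ 𝒳 i, f x = 0 → x = 0 := by
    intro i x hx hfx
    rcases lt_or_ge i n with hi | hi
    · simpa [hXlow i hi] using hx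
    obtain ⟨q, rfl⟩ := Nat.exists_eq_add_of_le hi
    apply hXstrong q x hx
    have hg : Function.Injective (f ∘ₗ (𝒳 n).subtype) := by
      rw [injective_iff_map_eq_zero]
      exact fun a ha => Subtype.ext (hfn a a.2 ha)
    have hcomm : (f ∘ₗ (𝒳 n).subtype) ∘ₗ gradedProj k 𝒳 n =
        ((𝒴 n).subtype ∘ₗ gradedProj k 𝒴 n) ∘ₗ f :=
      LinearMap.ext fun a => (gradedProj_map k 𝒳 𝒴 f hfgr n a).symm
    apply Module.Flat.lTensor_preserves_injective_linearMap (M := ↥(𝒳 n)) (𝒞 q).subtype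
      (𝒞 q).injective_subtype
    rw [← rTensor_gradedProj_coaction k C 𝒞 𝒳 RX n q x hx, map_zero]
    apply Module.Flat.rTensor_preserves_injective_linearMap (M := C) _ hg
    rw [← LinearMap.rTensor_comp_apply, hcomm, LinearMap.rTensor_comp_apply, ← hfcolin, hfx]
    simp only [map_zero]
  rw [injective_iff_map_eq_zero]
  intro x hx
  have hzero : ∀ i, gradedProj k 𝒳 i x = 0 := by
    intro i
    apply Subtype.ext
    apply hom i _ (gradedProj k 𝒳 i x).2
    rw [← gradedProj_map k 𝒳 𝒴 f hfgr i x, hx, map_zero, ZeroMemClass.coe_zero]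
  apply (DirectSum.decompose 𝒳).injective
  rw [DirectSum.decompose_zero]
  ext i : 1
  exact hzero i

end Koszul
end
end

section
/- Let π : C → D be a morphism of connected strongly graded k-coalgebras (a k-linear coalgebra morphism with π(Cₙ) ⊆ Dₙ for all n). Let m ≥ 2 be such that the components πᵢ : Cᵢ → Dᵢ are bijective for all 0 ≤ i < m and Ext_C^{2,m}(k,k) = 0. Then π_m : C_m → D_m is bijective. -/
/-!
Write `Δ₊` for the reduced comultiplication. On `D_n` with `n ≥ 2` it is injective, because its
component `Δ_{1,n-1}` is (`deltaPlus_injOn`), and on `C_n` with `n ≥ 1` it takes values in the sum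
of the `C_p ⊗ C_{n-p}` with `0 < p < n` (`deltaPlus_eq`), hence it only involves degrees below `n`.

The inverses of the bijections `πᵢ`, `i < m`, glue to a linear map `σ : D → C` that vanishes in
degrees `≥ m` (`exists_section`); it commutes with `Δ₊` on `D_i` for `1 ≤ i < m`.

Injectivity of `π_m`: if `π x = 0` then `Δ₊ x = (σπ ⊗ σπ)(Δ₊ x) = (σ ⊗ σ)(Δ₊ (π x)) = 0`.

Surjectivity of `π_m`: for `y ∈ D_m` put `z = (σ ⊗ σ)(Δ₊ y) ∈ Ω²(C, m)`. Then
`d z = (σ ⊗ σ ⊗ σ)(d (Δ₊ y))`, which vanishes because `Δ₊` is coassociative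
(`deltaPlus_coassoc`). As `Ext^{2,m} = 0`, there is `x ∈ C_m` with `Δ₊ x = z`, so
`Δ₊ (π x) = (π ⊗ π) z = Δ₊ y`, and `π x = y` by injectivity of `Δ₊` on `D_m`.
-/


open TensorProduct

noncomputable section
namespace Koszul

variable (k : Type) [Field k]

variable (C : Type) [AddCommGroup C] [Module k C] [Coalgebra k C]
variable (𝒞 : ℕ → Submodule k C)

section Helpers

variable {k C 𝒞}
variable {A : Type} [AddCommGroup A] [Module k A] {𝒜 : ℕ → Submodule k A}

/-- The projection of `A` onto its homogeneous component `A_i`. -/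
def projC (𝒜 : ℕ → Submodule k A) [DirectSum.Decomposition 𝒜] (i : ℕ) : A →ₗ[k] 𝒜 i :=
  (DirectSum.component k ℕ (fun i => 𝒜 i) i).comp
    (DirectSum.decomposeLinearEquiv 𝒜).toLinearMap

lemma projC_same [DirectSum.Decomposition 𝒜] (i : ℕ) (x : 𝒜 i) : projC 𝒜 i x = x := by
  change (DirectSum.decompose 𝒜 (x : A)) i = x
  rw [DirectSum.decompose_coe, DirectSum.of_eq_same]

lemma projC_ne [DirectSum.Decomposition 𝒜] {i j : ℕ} (h : j ≠ i) {x : A} (hx : x ∈ 𝒜 j) :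
    projC 𝒜 i x = 0 := by
  change (DirectSum.decompose 𝒜 x) i = 0
  exact Subtype.ext (DirectSum.decompose_of_mem_ne 𝒜 hx h)

lemma tmap_tmap {U V U' V' U'' V'' : Type} [AddCommGroup U] [Module k U] [AddCommGroup V]
    [Module k V] [AddCommGroup U'] [Module k U'] [AddCommGroup V'] [Module k V'] [AddCommGroup U'']
    [Module k U''] [AddCommGroup V''] [Module k V''] (f : U' →ₗ[k] U'') (h : V' →ₗ[k] V'')
    (a : U →ₗ[k] U') (b : V →ₗ[k] V') (t : U ⊗[k] V) :
    TensorProduct.map f h (TensorProduct.map a b t) =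
      TensorProduct.map (f.comp a) (h.comp b) t := by
  rw [TensorProduct.map_comp, LinearMap.comp_apply]

lemma GradedCoalgebraData.g_mem (DC : GradedCoalgebraData k C 𝒞) : DC.g ∈ 𝒞 0 := by
  rw [DC.hC0]; exact Submodule.mem_span_singleton_self _

lemma deltaPlus_apply (g x : C) :
    deltaPlus k C g x = Coalgebra.comul (R := k) x - g ⊗ₜ[k] x - x ⊗ₜ[k] g := rfl

/-- The component `Δ_{0,n}` is `x ↦ g ⊗ x`: it is of the form `g ⊗ x₀` because `C₀ = k·g`, and the
counit axiom gives `x₀ = x`. -/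
lemma comul_left (DC : GradedCoalgebraData k C 𝒞) {n : ℕ} {x : C} (hx : x ∈ 𝒞 n) :
    TensorProduct.map (𝒞 0).subtype (𝒞 n).subtype (DC.Δc 0 n x) = DC.g ⊗ₜ[k] x := by
  -- every tensor in `C₀ ⊗ C_n` is `g ⊗ (ε ⊗ id)(t)`
  have key : ∀ t : ↥(𝒞 0) ⊗[k] ↥(𝒞 n), TensorProduct.map (𝒞 0).subtype (𝒞 n).subtype t =
      DC.g ⊗ₜ[k] (TensorProduct.lid k C ((Coalgebra.counit (R := k) (A := C)).rTensor C
        (TensorProduct.map (𝒞 0).subtype (𝒞 n).subtype t))) := by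
    intro t
    induction t with
    | zero => simp
    | add a b ha hb =>
      simp only [map_add, TensorProduct.tmul_add]
      rw [← ha, ← hb]
    | tmul a b =>
      obtain ⟨a, ha⟩ := a
      rw [DC.hC0] at ha
      obtain ⟨c, rfl⟩ := Submodule.mem_span_singleton.1 ha
      simp [DC.hcu, TensorProduct.smul_tmul]
  have hpos : ∀ p, 1 ≤ p → ∀ q, ∀ t : ↥(𝒞 p) ⊗[k] ↥(𝒞 q),
      (Coalgebra.counit (R := k) (A := C)).rTensor C
        (TensorProduct.map (𝒞 p).subtype (𝒞 q).subtype t) = 0 := by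
    intro p hp q t
    induction t with
    | zero => simp
    | add a b ha hb => simp only [map_add, ha, hb, add_zero]
    | tmul a b => simp [DC.hcounit p hp a a.2]
  have h := congrArg ((Coalgebra.counit (R := k) (A := C)).rTensor C) (DC.hΔc n x hx)
  rw [Coalgebra.rTensor_counit_comul, map_sum, Finset.sum_range_succ'] at h
  rw [Finset.sum_eq_zero (fun p _ => hpos (p + 1) (by omega) _ _), zero_add] at h
  rw [key]
  simp only [Nat.sub_zero] at h
  rw [← h]
  simp

/-- The component `Δ_{n,0}` is `x ↦ x ⊗ g`. -/
lemma comul_right (DC : GradedCoalgebraData k C 𝒞) {n : ℕ} {x : C} (hx : x ∈ 𝒞 n) :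
    TensorProduct.map (𝒞 n).subtype (𝒞 0).subtype (DC.Δc n 0 x) = x ⊗ₜ[k] DC.g := by
  have key : ∀ t : ↥(𝒞 n) ⊗[k] ↥(𝒞 0), TensorProduct.map (𝒞 n).subtype (𝒞 0).subtype t =
      (TensorProduct.rid k C ((Coalgebra.counit (R := k) (A := C)).lTensor C
        (TensorProduct.map (𝒞 n).subtype (𝒞 0).subtype t))) ⊗ₜ[k] DC.g := by
    intro t
    induction t with
    | zero => simp
    | add a b ha hb =>
      simp only [map_add, TensorProduct.add_tmul]
      rw [← ha, ← hb]
    | tmul b a =>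
      obtain ⟨a, ha⟩ := a
      rw [DC.hC0] at ha
      obtain ⟨c, rfl⟩ := Submodule.mem_span_singleton.1 ha
      simp [DC.hcu, TensorProduct.smul_tmul]
  have hpos : ∀ q, 1 ≤ q → ∀ p, ∀ t : ↥(𝒞 p) ⊗[k] ↥(𝒞 q),
      (Coalgebra.counit (R := k) (A := C)).lTensor C
        (TensorProduct.map (𝒞 p).subtype (𝒞 q).subtype t) = 0 := by
    intro q hq p t
    induction t with
    | zero => simp
    | add a b ha hb => simp only [map_add, ha, hb, add_zero]
    | tmul a b => simp [DC.hcounit q hq b b.2]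
  have h := congrArg ((Coalgebra.counit (R := k) (A := C)).lTensor C) (DC.hΔc n x hx)
  rw [Coalgebra.lTensor_counit_comul, map_sum, Finset.sum_range_succ] at h
  rw [Finset.sum_eq_zero (fun p hp => hpos (n - p) (by have := Finset.mem_range.1 hp; omega) _ _),
    zero_add] at h
  have hq : ∀ q, q = 0 → TensorProduct.map (𝒞 n).subtype (𝒞 q).subtype (DC.Δc n q x) =
      TensorProduct.map (𝒞 n).subtype (𝒞 0).subtype (DC.Δc n 0 x) := by
    rintro _ rfl; rfl
  rw [hq _ (Nat.sub_self n)] at h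
  rw [key, ← h]
  simp

/-- In positive degree `Δ₊` is the sum of the components `Δ_{p,q}` with `p, q ≥ 1`. -/
lemma deltaPlus_eq (DC : GradedCoalgebraData k C 𝒞) {n : ℕ} (hn : 1 ≤ n) {x : C}
    (hx : x ∈ 𝒞 n) :
    deltaPlus k C DC.g x = ∑ p ∈ Finset.Ico 1 n,
      TensorProduct.map (𝒞 p).subtype (𝒞 (n - p)).subtype (DC.Δc p (n - p) x) := by
  rw [deltaPlus_apply, DC.hΔc n x hx, Finset.range_eq_Ico,
    Finset.sum_eq_sum_Ico_succ_bot (by omega), Finset.sum_Ico_succ_top (by omega)]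
  have hq : ∀ q, q = 0 → TensorProduct.map (𝒞 n).subtype (𝒞 q).subtype (DC.Δc n q x) =
      x ⊗ₜ[k] DC.g := by
    rintro _ rfl; exact comul_right DC hx
  rw [hq _ (Nat.sub_self n), Nat.sub_zero, comul_left DC hx, zero_add]
  abel

/-- `Δ₊` is injective in degrees `≥ 2`, since its component `Δ_{1,n-1}` is. -/
lemma deltaPlus_injOn [DirectSum.Decomposition 𝒞] (DC : GradedCoalgebraData k C 𝒞)
    (hS : DC.Strong) {n : ℕ} (hn : 2 ≤ n) {x : C} (hx : x ∈ 𝒞 n)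
    (h : deltaPlus k C DC.g x = 0) : x = 0 := by
  have hn1 : 1 + (n - 1) = n := by omega
  refine hS 1 (n - 1) x (by rwa [hn1]) ?_
  rw [deltaPlus_eq DC (by omega) hx] at h
  have h2 := congrArg (TensorProduct.map (projC 𝒞 1) (projC 𝒞 (n - 1))) h
  rw [map_sum, map_zero, Finset.sum_eq_single 1] at h2
  · rw [tmap_tmap] at h2
    have e : ∀ i, (projC 𝒞 i).comp (𝒞 i).subtype = LinearMap.id := by
      intro i
      ext1 y
      rw [LinearMap.comp_apply, LinearMap.id_apply, Submodule.subtype_apply, projC_same]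
    rwa [e, e, TensorProduct.map_id, LinearMap.id_apply] at h2
  · intro p _ hp
    rw [tmap_tmap]
    have e : (projC 𝒞 1).comp (𝒞 p).subtype = 0 := by
      ext1 y
      rw [LinearMap.comp_apply, LinearMap.zero_apply, Submodule.subtype_apply]
      exact projC_ne hp y.2
    rw [e, TensorProduct.map_zero_left, LinearMap.zero_apply]
  · intro h1
    exact absurd (Finset.mem_Ico.2 ⟨le_rfl, by omega⟩) h1

/-- Two pairs of linear maps that agree in degrees below `m` agree on `Δ₊(C_n)` for `n ≤ m`. -/
lemma map_deltaPlus_congr (DC : GradedCoalgebraData k C 𝒞) {m n : ℕ} (hn : 1 ≤ n) (hnm : n ≤ m)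
    {x : C} (hx : x ∈ 𝒞 n) {U V : Type} [AddCommGroup U] [Module k U] [AddCommGroup V] [Module k V]
    {f f' : C →ₗ[k] U} {h h' : C →ₗ[k] V}
    (hf : ∀ i, 1 ≤ i → i < m → ∀ c ∈ 𝒞 i, f c = f' c)
    (hh : ∀ i, 1 ≤ i → i < m → ∀ c ∈ 𝒞 i, h c = h' c) :
    TensorProduct.map f h (deltaPlus k C DC.g x) =
      TensorProduct.map f' h' (deltaPlus k C DC.g x) := by
  rw [deltaPlus_eq DC hn hx, map_sum, map_sum]
  refine Finset.sum_congr rfl fun p hp => ?_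
  rw [Finset.mem_Ico] at hp
  rw [tmap_tmap, tmap_tmap]
  have e1 : f.comp (𝒞 p).subtype = f'.comp (𝒞 p).subtype :=
    LinearMap.ext fun y => hf p (by omega) (by omega) y y.2
  have e2 : h.comp (𝒞 (n - p)).subtype = h'.comp (𝒞 (n - p)).subtype :=
    LinearMap.ext fun y => hh (n - p) (by omega) (by omega) y y.2
  rw [e1, e2]

/-- Coassociativity of the reduced comultiplication at a grouplike element. -/
lemma deltaPlus_coassoc {g : C} (hg : Coalgebra.comul (R := k) g = g ⊗ₜ[k] g) (x : C) :
    TensorProduct.assoc k C C C ((deltaPlus k C g).rTensor C (deltaPlus k C g x)) =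
      (deltaPlus k C g).lTensor C (deltaPlus k C g x) := by
  have h1 : ∀ t : C ⊗[k] C, TensorProduct.assoc k C C C
      ((TensorProduct.mk k C C g).rTensor C t) = g ⊗ₜ[k] t := by
    intro t
    induction t with
    | zero => simp
    | add a b ha hb => simp only [map_add, ha, hb, TensorProduct.tmul_add]
    | tmul a b => simp
  have h2 : ∀ t : C ⊗[k] C, TensorProduct.assoc k C C C
      (((TensorProduct.mk k C C).flip g).rTensor C t) =
        (TensorProduct.mk k C C g).lTensor C t := by
    intro t
    induction t with
    | zero => simp
    | add a b ha hb => simp only [map_add, ha, hb]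
    | tmul a b => simp
  have h3 : ∀ t : C ⊗[k] C, ((TensorProduct.mk k C C).flip g).lTensor C t =
      TensorProduct.assoc k C C C (t ⊗ₜ[k] g) := by
    intro t
    induction t with
    | zero => simp
    | add a b ha hb => simp only [map_add, ha, hb, TensorProduct.add_tmul]
    | tmul a b => simp
  have hg' : deltaPlus k C g g = - (g ⊗ₜ[k] g) := by rw [deltaPlus_apply, hg]; abel
  have hl : ∀ t, TensorProduct.assoc k C C C ((deltaPlus k C g).rTensor C t) =
      TensorProduct.assoc k C C C ((Coalgebra.comul (R := k) (A := C)).rTensor C t)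
        - g ⊗ₜ[k] t - (TensorProduct.mk k C C g).lTensor C t := by
    intro t
    rw [← h1, ← h2, deltaPlus, LinearMap.rTensor_sub, LinearMap.rTensor_sub]
    simp only [LinearMap.sub_apply, map_sub]
  have hr : ∀ t, (deltaPlus k C g).lTensor C t =
      (Coalgebra.comul (R := k) (A := C)).lTensor C t
        - (TensorProduct.mk k C C g).lTensor C t - TensorProduct.assoc k C C C (t ⊗ₜ[k] g) := by
    intro t
    rw [← h3, deltaPlus, LinearMap.lTensor_sub, LinearMap.lTensor_sub]
    simp only [LinearMap.sub_apply]
  rw [hl, hr, deltaPlus_apply]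
  simp only [map_sub, Coalgebra.coassoc_apply, LinearMap.rTensor_tmul, LinearMap.lTensor_tmul, hg,
    TensorProduct.assoc_tmul, TensorProduct.tmul_sub, TensorProduct.sub_tmul,
    TensorProduct.mk_apply]
  abel

/-- A graded map `π` that is bijective in degrees below `m` has a graded linear `σ : D → A`
inverting it in these degrees. -/
lemma exists_section {D : Type} [AddCommGroup D] [Module k D]
    (𝒟 : ℕ → Submodule k D) [DirectSum.Decomposition 𝒟] (π : A →ₗ[k] D)
    (hgraded : ∀ n : ℕ, ∀ x ∈ 𝒜 n, π x ∈ 𝒟 n) (m : ℕ)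
    (hbij : ∀ i : ℕ, i < m →
      Function.Bijective (fun x : ↥(𝒜 i) => (⟨π x, hgraded i x x.2⟩ : ↥(𝒟 i)))) :
    ∃ σ : D →ₗ[k] A, (∀ i < m, ∀ y ∈ 𝒟 i, σ y ∈ 𝒜 i ∧ π (σ y) = y) ∧
      (∀ i < m, ∀ x ∈ 𝒜 i, σ (π x) = x) := by
  let e : ∀ i : Fin m, 𝒜 i ≃ₗ[k] 𝒟 i := fun i =>
    LinearEquiv.ofBijective (π.restrict (hgraded i)) (hbij i i.2)
  let σ : D →ₗ[k] A := ∑ i : Fin m,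
    (𝒜 i).subtype.comp ((e i).symm.toLinearMap.comp (projC 𝒟 i))
  have hσ : ∀ i : Fin m, ∀ y : 𝒟 i, σ y = (e i).symm y := by
    intro i y
    simp only [σ, LinearMap.sum_apply]
    rw [Finset.sum_eq_single i]
    · simp [projC_same]
    · intro j _ hj
      have hij : (i : ℕ) ≠ j := fun h => hj (Fin.ext h.symm)
      simp [projC_ne hij y.2]
    · simp
  refine ⟨σ, fun i hi y hy => ?_, fun i hi x hx => ?_⟩
  · have h := hσ ⟨i, hi⟩ ⟨y, hy⟩
    simp only at h
    rw [h]
    exact ⟨((e ⟨i, hi⟩).symm ⟨y, hy⟩).2,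
      congrArg Subtype.val ((e ⟨i, hi⟩).apply_symm_apply ⟨y, hy⟩)⟩
  · have h := hσ ⟨i, hi⟩ (e ⟨i, hi⟩ ⟨x, hx⟩)
    rw [LinearEquiv.symm_apply_apply] at h
    exact h

/-- A 2-cocycle of the degree-`m` cobar complex is `Δ₊ x` for some `x ∈ A_m` once `Ext^{2,m} = 0`;
the hypotheses spell out `Ω²(A, m)` and `d²` in terms of plain tensor products. -/
lemma exists_of_ext {Δp : A →ₗ[k] A ⊗[k] A} {m : ℕ} (hm : m ≠ 0)
    (hext : Subsingleton (ExtGrp k A 𝒜 Δp 2 m)) (z : A ⊗[k] A)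
    (hz : z ∈ omega k 𝒜 2 m)
    (hd : TensorProduct.assoc k A A A (Δp.rTensor A z) = Δp.lTensor A z) :
    ∃ x ∈ 𝒜 m, Δp x = z := by
  have hker : cobarD k A Δp 2 z = 0 := by
    have h0 : cobarD k A Δp 2 =
        ((-1 : k) ^ 0) • expand k A Δp 1 0 + ((-1 : k) ^ 1) • expand k A Δp 1 1 := by
      change ∑ i ∈ Finset.range 2, ((-1:k)^i) • expand k A Δp 1 i = _
      rw [Finset.sum_range_succ, Finset.sum_range_one]
    rw [h0, pow_zero, one_smul, pow_one, neg_one_smul]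
    change TensorProduct.assoc k A A A (Δp.rTensor A z) + -(Δp.lTensor A z) = 0
    rw [hd, add_neg_cancel]
  have hq := Submodule.Quotient.subsingleton_iff.1 hext
  have hmem : (⟨z, hker, hz⟩ :
      ↥(LinearMap.ker (cobarD k A Δp 2) ⊓ omega k 𝒜 2 m)) ∈
      (Submodule.comap (LinearMap.ker (cobarD k A Δp 2) ⊓ omega k 𝒜 2 m).subtype
          (Submodule.map (cobarD k A Δp 1) (omega k 𝒜 1 m))) := by
    rw [hq]; trivial
  obtain ⟨x, hx, hxz⟩ := hmem
  have h1 : omega k 𝒜 1 m = 𝒜 m := if_neg hm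
  refine ⟨x, ?_, ?_⟩
  · have : x ∈ omega k 𝒜 1 m := hx
    rw [h1] at this
    exact this
  · have h0 : cobarD k A Δp 1 = expand k A Δp 0 0 := by
      change ∑ i ∈ Finset.range 1, ((-1:k)^i) • expand k A Δp 0 i = _
      rw [Finset.sum_range_one, pow_zero, one_smul]
    rw [h0] at hxz
    exact hxz

lemma map_mem_omega_two {m p : ℕ} (hp : 1 ≤ p) (hpm : p < m) {U V : Type} [AddCommGroup U]
    [Module k U] [AddCommGroup V] [Module k V] {f : U →ₗ[k] A} {h : V →ₗ[k] A}
    (hf : ∀ u, f u ∈ 𝒜 p) (hh : ∀ v, h v ∈ 𝒜 (m - p)) (t : U ⊗[k] V) :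
    TensorProduct.map f h t ∈ omega k 𝒜 2 m := by
  have h1 : omega k 𝒜 1 (m - p) = 𝒜 (m - p) := if_neg (by omega)
  change _ ∈ ⨆ p ∈ Finset.Icc 1 m,
    LinearMap.range (TensorProduct.map (𝒜 p).subtype (omega k 𝒜 1 (m-p)).subtype)
  refine Submodule.mem_iSup_of_mem p (Submodule.mem_iSup_of_mem
    (Finset.mem_Icc.2 ⟨hp, hpm.le⟩) ?_)
  refine ⟨TensorProduct.map (f.codRestrict _ hf)
    (h.codRestrict (omega k 𝒜 1 (m - p)) fun v => ?_) t, ?_⟩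
  · rw [h1]; exact hh v
  · rw [tmap_tmap]
    rfl

end Helpers

/-- **Statement 14.** Let `π : C → D` be a morphism of connected strongly graded
`k`-coalgebras whose components `πᵢ : Cᵢ → Dᵢ` are bijective for all `0 ≤ i < m`, where
`m ≥ 2`.  If `Ext_C^{2,m}(k,k) = 0`, then `πₘ : Cₘ → Dₘ` is bijective. -/
theorem statement14 [DirectSum.Decomposition 𝒞]
    (DC : GradedCoalgebraData k C 𝒞) (hCstrong : DC.Strong)
    (D : Type) [AddCommGroup D] [Module k D] [Coalgebra k D]
    (𝒟 : ℕ → Submodule k D) [DirectSum.Decomposition 𝒟]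
    (DD : GradedCoalgebraData k D 𝒟) (hDstrong : DD.Strong)
    (π : C →ₗ[k] D)
    (hcomul : ∀ x : C, Coalgebra.comul (R := k) (π x) =
      (TensorProduct.map π π) (Coalgebra.comul (R := k) x))
    (hcounit : ∀ x : C, Coalgebra.counit (R := k) (π x) = Coalgebra.counit (R := k) x)
    (hgraded : ∀ n : ℕ, ∀ x ∈ 𝒞 n, π x ∈ 𝒟 n)
    (m : ℕ) (hm : 2 ≤ m)
    (hbij : ∀ i : ℕ, i < m →
      Function.Bijective (fun x : ↥(𝒞 i) => (⟨π x, hgraded i x x.2⟩ : ↥(𝒟 i))))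
    (hext : Subsingleton (ExtGrp k C 𝒞 (deltaPlus k C DC.g) 2 m)) :
    Function.Bijective (fun x : ↥(𝒞 m) => (⟨π x, hgraded m x x.2⟩ : ↥(𝒟 m))) := by
  obtain ⟨σ, hσ, hσπ⟩ := exists_section 𝒟 π hgraded m hbij
  -- `π g ∈ D₀ = k·g`, and the counit determines the scalar
  have hg : π DC.g = DD.g := by
    have h := hgraded 0 _ DC.g_mem
    rw [DD.hC0] at h
    obtain ⟨c, hc⟩ := Submodule.mem_span_singleton.1 h
    have h2 := hcounit DC.g
    rw [← hc, map_smul, DD.hcu, DC.hcu, smul_eq_mul, mul_one] at h2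
    rw [← hc, h2, one_smul]
  have hπΔ : ∀ x, deltaPlus k D DD.g (π x) =
      TensorProduct.map π π (deltaPlus k C DC.g x) := by
    intro x
    rw [deltaPlus_apply, deltaPlus_apply, hcomul]
    simp [hg]
  have hσπΔ : ∀ n, 1 ≤ n → n ≤ m → ∀ x ∈ 𝒞 n,
      TensorProduct.map σ σ (deltaPlus k D DD.g (π x)) = deltaPlus k C DC.g x := by
    intro n hn hnm x hx
    rw [hπΔ, tmap_tmap]
    have e : ∀ i, 1 ≤ i → i < m → ∀ c ∈ 𝒞 i, (σ.comp π) c = LinearMap.id (R := k) c :=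
      fun i _ hi c hc => hσπ i hi c hc
    rw [map_deltaPlus_congr DC hn hnm hx e e, TensorProduct.map_id, LinearMap.id_apply]
  have hσΔ : ∀ n, 1 ≤ n → n < m → ∀ y ∈ 𝒟 n,
      deltaPlus k C DC.g (σ y) = TensorProduct.map σ σ (deltaPlus k D DD.g y) := by
    intro n hn hnm y hy
    obtain ⟨h1, h2⟩ := hσ n hnm y hy
    rw [← hσπΔ n hn hnm.le _ h1, h2]
  constructor
  · rintro ⟨x, hx⟩ ⟨y, hy⟩ hxy
    have hxy' : π x = π y := congrArg Subtype.val hxy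
    have h0 : π (x - y) = 0 := by rw [map_sub, hxy', sub_self]
    have h1 := hσπΔ m (by omega) le_rfl (x - y) (sub_mem hx hy)
    rw [h0, map_zero, map_zero] at h1
    exact Subtype.ext (sub_eq_zero.1 (deltaPlus_injOn DC hCstrong hm (sub_mem hx hy) h1.symm))
  · rintro ⟨y, hy⟩
    have hz : TensorProduct.map σ σ (deltaPlus k D DD.g y) ∈ omega k 𝒞 2 m := by
      rw [deltaPlus_eq DD (by omega) hy, map_sum]
      refine Submodule.sum_mem _ fun p hp => ?_
      rw [Finset.mem_Ico] at hp
      rw [tmap_tmap]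
      exact map_mem_omega_two (f := σ.comp (𝒟 p).subtype) (h := σ.comp (𝒟 (m - p)).subtype)
        hp.1 hp.2 (fun u => (hσ p hp.2 u u.2).1)
        (fun v => (hσ (m - p) (by omega) v v.2).1) _
    have hl : (deltaPlus k C DC.g).rTensor C (TensorProduct.map σ σ (deltaPlus k D DD.g y)) =
        TensorProduct.map (TensorProduct.map σ σ) σ
          ((deltaPlus k D DD.g).rTensor D (deltaPlus k D DD.g y)) := by
      simp only [LinearMap.rTensor, tmap_tmap]
      exact map_deltaPlus_congr DD (by omega) le_rfl hy
        (fun i hi him c hc => hσΔ i hi him c hc) (fun _ _ _ _ _ => rfl)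
    have hr : (deltaPlus k C DC.g).lTensor C (TensorProduct.map σ σ (deltaPlus k D DD.g y)) =
        TensorProduct.map σ (TensorProduct.map σ σ)
          ((deltaPlus k D DD.g).lTensor D (deltaPlus k D DD.g y)) := by
      simp only [LinearMap.lTensor, tmap_tmap]
      exact map_deltaPlus_congr DD (by omega) le_rfl hy
        (fun _ _ _ _ _ => rfl) (fun i hi him c hc => hσΔ i hi him c hc)
    obtain ⟨x, hx, hxz⟩ := exists_of_ext (by omega) hext _ hz (by
      rw [hl, hr, ← deltaPlus_coassoc DD.hgrp, TensorProduct.map_map_assoc])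
    refine ⟨⟨x, hx⟩, Subtype.ext ?_⟩
    have hπσ : TensorProduct.map π π (TensorProduct.map σ σ (deltaPlus k D DD.g y)) =
        deltaPlus k D DD.g y := by
      rw [tmap_tmap]
      have e : ∀ i, 1 ≤ i → i < m → ∀ c ∈ 𝒟 i, (π.comp σ) c = LinearMap.id (R := k) c :=
        fun i _ hi c hc => (hσ i hi c hc).2
      rw [map_deltaPlus_congr DD (by omega) le_rfl hy e e, TensorProduct.map_id,
        LinearMap.id_apply]
    have hΔ : deltaPlus k D DD.g (π x - y) = 0 := by
      rw [map_sub, hπΔ, hxz, hπσ, sub_self]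
    exact sub_eq_zero.1 (deltaPlus_injOn DD hDstrong hm (sub_mem (hgraded m x hx) hy) hΔ)

end Koszul
end
end

section
/- Let C be a connected strongly graded k-coalgebra. Then C is quadratic if and only if Ext_C^{2,m}(k,k) = 0 for all m ≥ 3. -/
/-!
Write `K = Im Δ_{1,1}`. The bridge between the two sides is a condition on a single degree
`m ≥ 3`, called `QuadCond` below: every `u ∈ C₁ ⊗ C_{m-1}` with
`(id ⊗ Δ_{1,m-2}) u ∈ K ⊗ C_{m-2}` lies in `Im Δ_{1,m-1}`.

*Quadratic iff `QuadCond` in all degrees.* Strong grading makes all `Δ(m)` injective, and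
`C̃_m = (K ⊗ C₁^{⊗(m-2)}) ∩ (C₁ ⊗ C̃_{m-1})`. Once `C̃_{m-1} = Im Δ(m-1)`, the elements of `C̃_m`
are the images under `id ⊗ Δ(m-1)` of the tensors `u` in the hypothesis of `QuadCond`
(`quadratic_of_quadCond`, `quadCond_of_quadratic`).

*`QuadCond` in degree `m` implies `Ext^{2,m} = 0`* (`ext_of_quadCond`). A cocycle is a family
`z_{p,q}` with `(Δ_{a,b} ⊗ id) z_{a+b,c} = (id ⊗ Δ_{b,c}) z_{a,b+c}`. The case `a = b = 1` says
that `z_{1,m-1}` satisfies the hypothesis of `QuadCond`, so `z_{1,m-1} = Δ_{1,m-1} c`; the case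
`a = 1`, coassociativity and the injectivity of `Δ_{1,b}` give `z_{p,q} = Δ_{p,q} c` throughout.

*`Ext^{2,m} = 0` for all `m ≥ 3` implies `QuadCond`* (`quadCond_of_ext`), by strong induction on
the degree. There are `u_{p+1,q}` with `(Δ_{1,p} ⊗ id) u_{p+1,q} = (id ⊗ Δ_{p,q}) u`: for `p = 1`
this is the hypothesis on `u`, and for `p ≥ 2` it is `QuadCond` in degree `p + 1 < m` tensored
with `C_q` (`exists_component`). By
coassociativity and injectivity of the `Δ_{1,e}` these components form a cocycle with
`(1, m-1)` component `u`, and writing it as a coboundary exhibits `u` as an element of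
`Im Δ_{1,m-1}`.

Everything takes place in `C ⊗ C` and `C ⊗ (C ⊗ C)`, with the projections `pr n` onto the
homogeneous parts and `Δ_{p,q}` extended to a map `dl p q` on all of `C`. Exactness of `⊗` over
a field enters through contractions with functionals and retractions of injective maps.
-/

open TensorProduct

noncomputable section
namespace Koszul

variable (k : Type) [Field k]

variable (C : Type) [AddCommGroup C] [Module k C] [Coalgebra k C]
variable (𝒞 : ℕ → Submodule k C)

/-- The subspace `V^{⊗i} ⊗ K ⊗ V^{⊗(n-i)}` of `V^{⊗(n+2)}` (the subspace `K ⊆ V ⊗ V`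
inserted at the `(i+1)`-st position). -/
def insertK {V : Type} [AddCommGroup V] [Module k V] (K : Submodule k (V ⊗[k] V)) :
    (n i : ℕ) → Submodule k ↥(TP k V (n+2))
  | 0, 0 => K
  | 0, (_+1) => ⊥
  | (n+1), 0 => Submodule.map (TensorProduct.assoc k V V ↥(TP k V (n+1))).toLinearMap
      (LinearMap.range (TensorProduct.map K.subtype (LinearMap.id (M := ↥(TP k V (n+1))))))
  | (n+1), (i+1) =>
      LinearMap.range (TensorProduct.map (LinearMap.id (M := V)) (insertK K n i).subtype)

variable [DirectSum.Decomposition 𝒞]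

/-- `C̃_m = ⋂_{p=1}^{m-1} C₁^{⊗(p-1)} ⊗ Im Δ_{1,1} ⊗ C₁^{⊗(m-p-1)}` for `m = j+2`. -/
def Ctilde (D : GradedCoalgebraData k C 𝒞) (j : ℕ) : Submodule k ↥(TP k ↥(𝒞 1) (j+2)) :=
  ⨅ i ∈ Finset.range (j+1), insertK k (Submodule.map (D.Δc 1 1) (𝒞 2)) j i

/-- `C` is *quadratic*: for every `m = j+2 ≥ 2` the iterated comultiplication
`Δ(m) : Cₘ → C₁^{⊗m}` is injective with image `C̃_m`. -/
def CoalgQuadratic (D : GradedCoalgebraData k C 𝒞) : Prop :=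
  ∀ j : ℕ, (∀ x ∈ 𝒞 (j+2), deltaIter k C 𝒞 D (j+2) x = 0 → x = 0) ∧
    Submodule.map (deltaIter k C 𝒞 D (j+2)) (𝒞 (j+2)) = Ctilde k C 𝒞 D j

section Proof

set_option linter.unusedSectionVars false

/-! ### Linear algebra over a field -/

section LinAlg

variable {k}
variable {A A' B B' : Type} [AddCommGroup A] [Module k A] [AddCommGroup A'] [Module k A']
  [AddCommGroup B'] [Module k B'] [AddCommGroup B] [Module k B]

/-- Pointwise functoriality of `⊗`; unlike `TensorProduct.map_comp` it rewrites applied maps. -/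
lemma mm {A'' B'' : Type} [AddCommGroup A''] [Module k A''] [AddCommGroup B''] [Module k B'']
    (f : A' →ₗ[k] A'') (g : B' →ₗ[k] B'') (f' : A →ₗ[k] A') (g' : B →ₗ[k] B') (z : A ⊗[k] B) :
    map f g (map f' g' z) = map (f ∘ₗ f') (g ∘ₗ g') z := by
  rw [map_comp, LinearMap.comp_apply]

/-- Naturality of the associator. -/
lemma assoc_mm {E E' : Type} [AddCommGroup E] [Module k E] [AddCommGroup E'] [Module k E']
    (f : A →ₗ[k] A') (g : B →ₗ[k] B') (h : E →ₗ[k] E') (z : (A ⊗[k] B) ⊗[k] E) :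
    TensorProduct.assoc k A' B' E' (map (map f g) h z) =
      map f (map g h) (TensorProduct.assoc k A B E z) :=
  (LinearMap.congr_fun (TensorProduct.map_map_comp_assoc_eq f g h) z).symm

/-- Contraction of the right tensor factor with a functional. -/
def contrR (φ : B →ₗ[k] k) : A ⊗[k] B →ₗ[k] A :=
  (TensorProduct.rid k A).toLinearMap ∘ₗ LinearMap.lTensor A φ

/-- Contraction of the left tensor factor with a functional. -/
def contrL (φ : A →ₗ[k] k) : A ⊗[k] B →ₗ[k] B :=
  (TensorProduct.lid k B).toLinearMap ∘ₗ LinearMap.rTensor B φ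

@[simp] lemma contrR_tmul (φ : B →ₗ[k] k) (a : A) (b : B) :
    contrR φ (a ⊗ₜ[k] b) = φ b • a := by simp [contrR]

@[simp] lemma contrL_tmul (φ : A →ₗ[k] k) (a : A) (b : B) :
    contrL φ (a ⊗ₜ[k] b) = φ a • b := by simp [contrL]

lemma contrL_map (φ : A →ₗ[k] k) (f : B →ₗ[k] B') (z : A ⊗[k] B) :
    contrL φ (map LinearMap.id f z) = f (contrL φ z) := by
  induction z with
  | zero => simp
  | tmul a b => simp
  | add x y hx hy => simp only [map_add, hx, hy]

lemma contrR_map (φ : B →ₗ[k] k) (f : A →ₗ[k] A') (z : A ⊗[k] B) :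
    contrR φ (map f LinearMap.id z) = f (contrR φ z) := by
  induction z with
  | zero => simp
  | tmul a b => simp
  | add x y hx hy => simp only [map_add, hx, hy]

lemma contrR_comm (φ : B →ₗ[k] k) (z : B ⊗[k] A) :
    contrR φ (TensorProduct.comm k B A z) = contrL φ z := by
  induction z with
  | zero => simp
  | tmul a b => simp
  | add x y hx hy => simp only [map_add, hx, hy]

lemma eq_zero_of_contrL (z : A ⊗[k] B) (h : ∀ φ : A →ₗ[k] k, contrL φ z = 0) : z = 0 := by
  classical
  let b := Module.Free.chooseBasis k A
  apply (TensorProduct.equivFinsuppOfBasisLeft (N := B) b).injective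
  ext i
  rw [map_zero, Finsupp.zero_apply, ← h (b.coord i)]
  clear h
  induction z with
  | zero => simp
  | tmul a b => simp
  | add x y hx hy => simp [hx, hy]

lemma eq_zero_of_contrR (z : A ⊗[k] B) (h : ∀ φ : B →ₗ[k] k, contrR φ z = 0) : z = 0 := by
  apply (TensorProduct.comm k A B).injective
  rw [map_zero]
  apply eq_zero_of_contrL
  intro φ
  rw [← contrR_comm]
  simpa using h φ

/-- Membership in `A ⊗ S` can be tested after contracting with all functionals on `A`; hence
`A ⊗ -` commutes with intersections of subspaces. -/
lemma mem_range_of_contrL (S : Submodule k B) (z : A ⊗[k] B)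
    (h : ∀ φ : A →ₗ[k] k, contrL φ z ∈ S) :
    z ∈ LinearMap.range (map (LinearMap.id (M := A)) S.subtype) := by
  have hz : map (LinearMap.id (M := A)) S.mkQ z = 0 := by
    apply eq_zero_of_contrL
    intro φ
    rw [contrL_map]
    simpa using h φ
  have hex : Function.Exact S.subtype S.mkQ := LinearMap.exact_subtype_mkQ S
  exact ((lTensor_exact A hex S.mkQ_surjective) z).1 hz

lemma contrL_mem (S : Submodule k B) (z : A ⊗[k] B)
    (h : z ∈ LinearMap.range (map (LinearMap.id (M := A)) S.subtype)) (φ : A →ₗ[k] k) :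
    contrL φ z ∈ S := by
  obtain ⟨t, rfl⟩ := h
  rw [contrL_map]
  exact Subtype.prop _

/-- Membership in the image of `f ⊗ id` can be tested after contracting with all functionals on
the right factor. -/
lemma exists_map_left_eq (f : A' →ₗ[k] A) (z : A ⊗[k] B)
    (h : ∀ φ : B →ₗ[k] k, ∃ c, contrR φ z = f c) :
    ∃ t : A' ⊗[k] B, map f LinearMap.id t = z := by
  have hz : map (LinearMap.range f).mkQ (LinearMap.id (M := B)) z = 0 := by
    apply eq_zero_of_contrR
    intro φ
    rw [contrR_map]
    obtain ⟨c, hc⟩ := h φ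
    rw [hc]
    simp
  have hex : Function.Exact f (LinearMap.range f).mkQ := LinearMap.exact_map_mkQ_range f
  exact ((rTensor_exact B hex (Submodule.mkQ_surjective _)) z).1 hz

lemma exists_factor (f : A →ₗ[k] A') (p : A →ₗ[k] B) (h : ∀ a, f a = 0 → p a = 0) :
    ∃ r : A' →ₗ[k] B, r ∘ₗ f = p := by
  obtain ⟨r, hr⟩ := (((LinearMap.ker f).liftQ p h) ∘ₗ
    f.quotKerEquivRange.symm.toLinearMap).exists_extend
  refine ⟨r, ?_⟩
  ext a
  have := LinearMap.congr_fun hr ⟨f a, a, rfl⟩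
  have h2 : f.quotKerEquivRange.symm ⟨f a, a, rfl⟩ = Submodule.Quotient.mk a := by
    rw [LinearEquiv.symm_apply_eq]; rfl
  have h3 : (LinearMap.ker f).liftQ p h (Submodule.Quotient.mk a) = p a :=
    Submodule.liftQ_apply _ _ _
  simpa [h2, h3] using this

end LinAlg

/-! ### Homogeneous components of the comultiplication -/

/-- The projection of `C` onto its homogeneous component `𝒞 n`. -/
def cmp (n : ℕ) : C →ₗ[k] ↥(𝒞 n) :=
  (DirectSum.component k ℕ (fun i => ↥(𝒞 i)) n).comp
    (DirectSum.decomposeLinearEquiv 𝒞).toLinearMap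

/-- The projection onto the degree `n` part, as an endomorphism of `C`. -/
def pr (n : ℕ) : C →ₗ[k] C := (𝒞 n).subtype ∘ₗ cmp k C 𝒞 n

/-- The component `Δ_{p,q}` of the comultiplication, as a map `C → C ⊗ C`. -/
def dl (p q : ℕ) : C →ₗ[k] C ⊗[k] C := map (pr k C 𝒞 p) (pr k C 𝒞 q) ∘ₗ Coalgebra.comul

variable {k C 𝒞}

lemma pr_mem (n : ℕ) (x : C) : pr k C 𝒞 n x ∈ 𝒞 n := Subtype.prop _

lemma cmp_of_mem {n : ℕ} {x : C} (hx : x ∈ 𝒞 n) : cmp k C 𝒞 n x = ⟨x, hx⟩ := by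
  apply Subtype.ext
  exact DirectSum.decompose_of_mem_same 𝒞 hx

lemma cmp_of_mem_ne {n m : ℕ} (h : n ≠ m) {x : C} (hx : x ∈ 𝒞 n) : cmp k C 𝒞 m x = 0 := by
  apply Subtype.ext
  exact DirectSum.decompose_of_mem_ne 𝒞 hx h

lemma pr_of_mem {n : ℕ} {x : C} (hx : x ∈ 𝒞 n) : pr k C 𝒞 n x = x := by
  simp [pr, cmp_of_mem hx]

lemma pr_of_mem_ne {n m : ℕ} (h : n ≠ m) {x : C} (hx : x ∈ 𝒞 n) : pr k C 𝒞 m x = 0 := by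
  simp [pr, cmp_of_mem_ne h hx]

lemma pr_comp_self (n : ℕ) : pr k C 𝒞 n ∘ₗ pr k C 𝒞 n = pr k C 𝒞 n :=
  LinearMap.ext fun x => pr_of_mem (pr_mem n x)

lemma pr_comp_ne {n m : ℕ} (h : n ≠ m) : pr k C 𝒞 m ∘ₗ pr k C 𝒞 n = 0 :=
  LinearMap.ext fun x => pr_of_mem_ne h (pr_mem n x)

lemma cmp_comp_pr (n : ℕ) : cmp k C 𝒞 n ∘ₗ pr k C 𝒞 n = cmp k C 𝒞 n :=
  LinearMap.ext fun x => cmp_of_mem (pr_mem n x)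

lemma eq_zero_of_pr (x : C) (h : ∀ n, pr k C 𝒞 n x = 0) : x = 0 := by
  apply (DirectSum.decomposeLinearEquiv (R := k) 𝒞).injective
  rw [map_zero]
  apply DFinsupp.ext
  intro n
  apply Subtype.ext
  exact h n

lemma eq_zero_of_pr_left {B : Type} [AddCommGroup B] [Module k B] (z : C ⊗[k] B)
    (h : ∀ n, map (pr k C 𝒞 n) LinearMap.id z = 0) : z = 0 := by
  apply eq_zero_of_contrR
  intro φ
  apply eq_zero_of_pr (𝒞 := 𝒞) (k := k)
  intro n
  rw [← contrR_map, h, map_zero]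

lemma eq_zero_of_pr_right {A : Type} [AddCommGroup A] [Module k A] (z : A ⊗[k] C)
    (h : ∀ n, map LinearMap.id (pr k C 𝒞 n) z = 0) : z = 0 := by
  apply eq_zero_of_contrL
  intro φ
  apply eq_zero_of_pr (𝒞 := 𝒞) (k := k)
  intro n
  rw [← contrL_map, h, map_zero]

lemma eq_zero_of_pr₂ (z : C ⊗[k] C)
    (h : ∀ a b, map (pr k C 𝒞 a) (pr k C 𝒞 b) z = 0) : z = 0 := by
  apply eq_zero_of_pr_left (𝒞 := 𝒞)
  intro a
  apply eq_zero_of_pr_right (𝒞 := 𝒞)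
  intro b
  rw [← LinearMap.comp_apply, ← map_comp]
  exact h a b

lemma eq_zero_of_pr₃ (z : C ⊗[k] (C ⊗[k] C))
    (h : ∀ a b c, map (pr k C 𝒞 a) (map (pr k C 𝒞 b) (pr k C 𝒞 c)) z = 0) : z = 0 := by
  apply eq_zero_of_pr_left (𝒞 := 𝒞)
  intro a
  apply eq_zero_of_contrL
  intro φ
  apply eq_zero_of_pr₂ (𝒞 := 𝒞)
  intro b c
  rw [← contrL_map, ← LinearMap.comp_apply (map _ _), ← map_comp, LinearMap.id_comp,
    LinearMap.comp_id, h, map_zero]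

/-- Linear maps out of `C` that agree on homogeneous elements are equal. -/
lemma ext_homog {B : Type} [AddCommGroup B] [Module k B] {f f' : C →ₗ[k] B}
    (h : ∀ n, ∀ x ∈ 𝒞 n, f x = f' x) : f = f' := by
  ext x
  induction x using DirectSum.Decomposition.inductionOn 𝒞 with
  | zero => simp
  | homogeneous x => exact h _ x x.2
  | add x y hx hy => simp [hx, hy]

/-- The given components `D.Δc p q` are those cut out of `Δ` by the projections. -/
lemma dl_eq (D : GradedCoalgebraData k C 𝒞) (p q : ℕ) :
    map (𝒞 p).subtype (𝒞 q).subtype ∘ₗ D.Δc p q = dl k C 𝒞 p q := by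
  apply ext_homog (𝒞 := 𝒞)
  intro n x hx
  simp only [dl, LinearMap.comp_apply, D.hΔc n x hx, map_sum]
  have key : ∀ p' ∈ Finset.range (n+1), (p' ≠ p ∨ n - p' ≠ q) →
      map (pr k C 𝒞 p) (pr k C 𝒞 q)
        (map (𝒞 p').subtype (𝒞 (n-p')).subtype (D.Δc p' (n-p') x)) = 0 := by
    intro p' _ h
    rw [← LinearMap.comp_apply, ← map_comp]
    rcases h with h | h
    · have : pr k C 𝒞 p ∘ₗ (𝒞 p').subtype = 0 := LinearMap.ext fun y => pr_of_mem_ne h y.2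
      rw [this]; simp
    · have : pr k C 𝒞 q ∘ₗ (𝒞 (n-p')).subtype = 0 := LinearMap.ext fun y => pr_of_mem_ne h y.2
      rw [this]; simp
  by_cases hn : n = p + q
  · rw [Finset.sum_eq_single p]
    · obtain rfl : q = n - p := by omega
      rw [← LinearMap.comp_apply (map _ _) (map _ _), ← map_comp]
      congr 2
      · exact LinearMap.ext fun y => (pr_of_mem y.2).symm
      · exact LinearMap.ext fun y => (pr_of_mem y.2).symm
    · intro b hb h
      exact key b hb (Or.inl h)
    · intro h
      simp at h; omega
  · rw [D.hΔc0 p q n hn x hx, map_zero, Finset.sum_eq_zero]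
    intro p' hp'
    apply key p' hp'
    simp at hp'
    omega

lemma dl_comp_pr (D : GradedCoalgebraData k C 𝒞) (p q : ℕ) :
    dl k C 𝒞 p q ∘ₗ pr k C 𝒞 (p + q) = dl k C 𝒞 p q := by
  apply ext_homog (𝒞 := 𝒞)
  intro n x hx
  by_cases hn : n = p + q
  · subst hn; simp [pr_of_mem hx]
  · rw [LinearMap.comp_apply, pr_of_mem_ne hn hx, ← dl_eq D, LinearMap.comp_apply,
      LinearMap.comp_apply, D.hΔc0 p q n hn x hx]
    simp

/-- Strong grading, stated as the existence of retractions of the maps `Δ_{p,q}`. -/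
lemma exists_retraction (D : GradedCoalgebraData k C 𝒞) (hs : D.Strong) (p q : ℕ) :
    ∃ r : C ⊗[k] C →ₗ[k] C, r ∘ₗ dl k C 𝒞 p q = pr k C 𝒞 (p + q) := by
  apply exists_factor
  intro a ha
  apply hs p q _ (pr_mem _ _)
  have hinj : Function.Injective (map (𝒞 p).subtype (𝒞 q).subtype) :=
    TensorProduct.map_injective_of_flat_flat _ _ (Submodule.injective_subtype _)
      (Submodule.injective_subtype _)
  apply hinj
  rw [map_zero]
  have := LinearMap.congr_fun (dl_eq D p q) (pr k C 𝒞 (p+q) a)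
  rw [LinearMap.comp_apply] at this
  rw [this, ← LinearMap.comp_apply, dl_comp_pr D, ha]

lemma comul_assoc (x : C) : TensorProduct.assoc k C C C
      (map Coalgebra.comul LinearMap.id (Coalgebra.comul x)) =
    map LinearMap.id (Coalgebra.comul (R := k)) (Coalgebra.comul x) :=
  Coalgebra.coassoc_apply x

/-- Coassociativity composed with arbitrary maps on the three factors. -/
lemma comul_assoc_map {A₁ A₂ A₃ : Type} [AddCommGroup A₁] [Module k A₁] [AddCommGroup A₂]
    [Module k A₂] [AddCommGroup A₃] [Module k A₃]
    (f : C →ₗ[k] A₁) (g : C →ₗ[k] A₂) (h : C →ₗ[k] A₃) (x : C) :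
    TensorProduct.assoc k A₁ A₂ A₃ (map (map f g ∘ₗ Coalgebra.comul) h (Coalgebra.comul x)) =
      map f (map g h ∘ₗ Coalgebra.comul) (Coalgebra.comul x) := by
  have h1 := mm (map f g) h (Coalgebra.comul (R := k)) LinearMap.id (Coalgebra.comul x)
  have h2 := mm f (map g h) LinearMap.id (Coalgebra.comul (R := k)) (Coalgebra.comul x)
  rw [LinearMap.comp_id] at h1 h2
  rw [← h1, ← h2, assoc_mm, comul_assoc]

lemma coassoc_dl (a b c : ℕ) (x : C) :
    TensorProduct.assoc k C C C (map (dl k C 𝒞 a b) (pr k C 𝒞 c) (Coalgebra.comul x)) =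
      map (pr k C 𝒞 a) (dl k C 𝒞 b c) (Coalgebra.comul x) :=
  comul_assoc_map _ _ _ x

/-- Coassociativity on components:
`(Δ_{a,b} ⊗ id) ∘ Δ_{a+b,c} = (id ⊗ Δ_{b,c}) ∘ Δ_{a,b+c}`. -/
lemma coassoc_comp (D : GradedCoalgebraData k C 𝒞) (a b c : ℕ) (x : C) :
    TensorProduct.assoc k C C C (map (dl k C 𝒞 a b) LinearMap.id (dl k C 𝒞 (a + b) c x)) =
      map LinearMap.id (dl k C 𝒞 b c) (dl k C 𝒞 a (b + c) x) := by
  have h := coassoc_dl (k := k) (𝒞 := 𝒞) a b c x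
  rw [dl.eq_1 k C 𝒞 (a + b), dl.eq_1 k C 𝒞 a (b + c), LinearMap.comp_apply,
    LinearMap.comp_apply, mm, mm, dl_comp_pr D, dl_comp_pr D]
  exact h

/-! ### Quadraticity in terms of degree `(1, m-1)` tensors -/

variable (k C 𝒞) in
/-- For `m = n + 3`: every `u ∈ C₁ ⊗ C_{m-1}` with `(id ⊗ Δ_{1,m-2}) u ∈ Im Δ_{1,1} ⊗ C_{m-2}`
lies in the image of `Δ_{1,m-1}`. -/
def QuadCond (n : ℕ) : Prop :=
  ∀ u : C ⊗[k] C, map (pr k C 𝒞 1) (pr k C 𝒞 (n + 2)) u = u →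
    (∃ t : C ⊗[k] C, map LinearMap.id (dl k C 𝒞 1 (n + 1)) u =
      TensorProduct.assoc k C C C (map (dl k C 𝒞 1 1) LinearMap.id t)) →
    ∃ c : C, u = dl k C 𝒞 1 (n + 2) c

lemma deltaIter_dl (D : GradedCoalgebraData k C 𝒞) (n : ℕ) (x : C) :
    deltaIter k C 𝒞 D (n + 2) x =
      map (cmp k C 𝒞 1) (deltaIter k C 𝒞 D (n + 1)) (dl k C 𝒞 1 (n + 1) x) := by
  rw [← dl_eq D, LinearMap.comp_apply]
  refine Eq.trans ?_ (mm _ _ _ _ _).symm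
  have : cmp k C 𝒞 1 ∘ₗ (𝒞 1).subtype = LinearMap.id := LinearMap.ext fun y => cmp_of_mem y.2
  rw [this]
  rfl

lemma deltaIter_comp_pr (D : GradedCoalgebraData k C 𝒞) (n : ℕ) :
    deltaIter k C 𝒞 D (n + 1) ∘ₗ pr k C 𝒞 (n + 1) = deltaIter k C 𝒞 D (n + 1) := by
  cases n with
  | zero => exact cmp_comp_pr 1
  | succ n =>
    ext x
    have h := LinearMap.congr_fun (dl_comp_pr D 1 (n + 1)) x
    rw [show 1 + (n + 1) = n + 1 + 1 by omega, LinearMap.comp_apply] at h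
    rw [LinearMap.comp_apply, deltaIter_dl, deltaIter_dl, h]

lemma deltaIter_comul (D : GradedCoalgebraData k C 𝒞) (n : ℕ) (x : C) :
    deltaIter k C 𝒞 D (n + 2) x =
      map (cmp k C 𝒞 1) (deltaIter k C 𝒞 D (n + 1)) (Coalgebra.comul x) := by
  rw [deltaIter_dl, dl, LinearMap.comp_apply]
  refine Eq.trans (mm _ _ _ _ _) ?_
  rw [cmp_comp_pr, deltaIter_comp_pr]

lemma subtype_comp_cmp (n : ℕ) : (𝒞 n).subtype ∘ₗ cmp k C 𝒞 n = pr k C 𝒞 n := rfl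

/-- In a strongly graded coalgebra every `Δ(m)`, `m ≥ 1`, has a retraction onto `C_m`. -/
lemma exists_retraction_iter (D : GradedCoalgebraData k C 𝒞) (hs : D.Strong) (n : ℕ) :
    ∃ r : ↥(TP k ↥(𝒞 1) (n + 1)) →ₗ[k] C,
      r ∘ₗ deltaIter k C 𝒞 D (n + 1) = pr k C 𝒞 (n + 1) := by
  induction n with
  | zero => exact ⟨(𝒞 1).subtype, rfl⟩
  | succ n ih =>
    obtain ⟨r, hr⟩ := ih
    obtain ⟨s, hs⟩ := exists_retraction D hs 1 (n + 1)
    refine ⟨s ∘ₗ map (𝒞 1).subtype r, ?_⟩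
    have hs' : s ∘ₗ dl k C 𝒞 1 (n + 1) = pr k C 𝒞 (n + 1 + 1) := by
      rw [hs, show 1 + (n + 1) = n + 1 + 1 by omega]
    refine LinearMap.ext fun x => Eq.trans ?_ (LinearMap.congr_fun hs' x)
    change s (map (𝒞 1).subtype r (deltaIter k C 𝒞 D (n + 2) x)) = s (dl k C 𝒞 1 (n + 1) x)
    rw [deltaIter_comul]
    congr 1
    refine Eq.trans (mm _ _ _ _ _) ?_
    rw [hr, subtype_comp_cmp]
    rfl

lemma map_deltaIter_eq_range (D : GradedCoalgebraData k C 𝒞) (n : ℕ) :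
    Submodule.map (deltaIter k C 𝒞 D (n + 1)) (𝒞 (n + 1)) =
      LinearMap.range (deltaIter k C 𝒞 D (n + 1)) := by
  apply le_antisymm
  · exact LinearMap.map_le_range
  · rintro _ ⟨x, rfl⟩
    refine ⟨pr k C 𝒞 (n + 1) x, pr_mem _ _, ?_⟩
    exact LinearMap.congr_fun (deltaIter_comp_pr D n) x

/-- `Im Δ_{1,1} ⊆ C₁ ⊗ C₁` is the range of the comultiplication of all of `C` projected to
`C₁ ⊗ C₁`. -/
lemma map_Δc_eq_range (D : GradedCoalgebraData k C 𝒞) :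
    Submodule.map (D.Δc 1 1) (𝒞 2) =
      LinearMap.range (map (cmp k C 𝒞 1) (cmp k C 𝒞 1) ∘ₗ Coalgebra.comul (R := k)) := by
  have h1 : deltaIter k C 𝒞 D 2 = map (cmp k C 𝒞 1) (cmp k C 𝒞 1) ∘ₗ Coalgebra.comul (R := k) :=
    LinearMap.ext fun x => deltaIter_comul D 0 x
  have h2 : ∀ x, deltaIter k C 𝒞 D 2 x = D.Δc 1 1 x := by
    intro x
    change map LinearMap.id (cmp k C 𝒞 1 ∘ₗ (𝒞 1).subtype) (D.Δc 1 1 x) = D.Δc 1 1 x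
    have : cmp k C 𝒞 1 ∘ₗ (𝒞 1).subtype = LinearMap.id := LinearMap.ext fun y => cmp_of_mem y.2
    rw [this, map_id, LinearMap.id_apply]
  rw [← h1]
  refine Eq.trans ?_ (map_deltaIter_eq_range D 1)
  ext y
  simp only [Submodule.mem_map]
  constructor
  · rintro ⟨x, hx, rfl⟩
    exact ⟨x, hx, h2 x⟩
  · rintro ⟨x, hx, rfl⟩
    exact ⟨x, hx, (h2 x).symm⟩

/-- The subspace `Im Δ_{1,1} ⊗ C₁^{⊗(j+1)}`, described as the image of a map on
`C ⊗ C₁^{⊗(j+1)}`. -/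
lemma mem_insertK_zero (D : GradedCoalgebraData k C 𝒞) (j : ℕ)
    (w : ↥(𝒞 1) ⊗[k] (↥(𝒞 1) ⊗[k] ↥(TP k ↥(𝒞 1) (j + 1)))) :
    (w ∈ (insertK k (Submodule.map (D.Δc 1 1) (𝒞 2)) (j + 1) 0 :
        Submodule k (↥(𝒞 1) ⊗[k] (↥(𝒞 1) ⊗[k] ↥(TP k ↥(𝒞 1) (j + 1)))))) ↔
      ∃ t : C ⊗[k] ↥(TP k ↥(𝒞 1) (j + 1)), w = TensorProduct.assoc k _ _ _
        (map (map (cmp k C 𝒞 1) (cmp k C 𝒞 1) ∘ₗ Coalgebra.comul (R := k)) LinearMap.id t) := by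
  set f := map (cmp k C 𝒞 1) (cmp k C 𝒞 1) ∘ₗ Coalgebra.comul (R := k) with hf
  have hK := map_Δc_eq_range D
  rw [← hf] at hK
  rw [hK]
  change w ∈ Submodule.map (TensorProduct.assoc k _ _ _).toLinearMap
    (LinearMap.range (map (LinearMap.range f).subtype LinearMap.id)) ↔ _
  have hfac : (LinearMap.range f).subtype ∘ₗ f.rangeRestrict = f := rfl
  have hm : ∀ t : C ⊗[k] ↥(TP k ↥(𝒞 1) (j + 1)), map (LinearMap.range f).subtype LinearMap.id
      (map f.rangeRestrict LinearMap.id t) = map f LinearMap.id t := fun t => by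
    rw [← LinearMap.comp_apply, ← map_comp, hfac, LinearMap.id_comp]
  constructor
  · rintro ⟨_, ⟨s, rfl⟩, rfl⟩
    have hsurj : Function.Surjective
        (map f.rangeRestrict (LinearMap.id (M := ↥(TP k ↥(𝒞 1) (j + 1))))) :=
      TensorProduct.map_surjective f.surjective_rangeRestrict Function.surjective_id
    obtain ⟨t, rfl⟩ := hsurj s
    exact ⟨t, congrArg _ (hm t)⟩
  · rintro ⟨t, rfl⟩
    exact ⟨_, ⟨map f.rangeRestrict LinearMap.id t, rfl⟩, congrArg _ (hm t)⟩

lemma mem_Ctilde (D : GradedCoalgebraData k C 𝒞) (j : ℕ) (w : ↥(TP k ↥(𝒞 1) (j + 2))) :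
    w ∈ Ctilde k C 𝒞 D j ↔
      ∀ i < j + 1, w ∈ insertK k (Submodule.map (D.Δc 1 1) (𝒞 2)) j i := by
  simp only [Ctilde, Submodule.mem_iInf, Finset.mem_range]

/-- The recursion `C̃_{m+1} = (Im Δ_{1,1} ⊗ C₁^{⊗(m-1)}) ∩ (C₁ ⊗ C̃_m)`. -/
lemma mem_Ctilde_succ (D : GradedCoalgebraData k C 𝒞) (j : ℕ)
    (w : ↥(𝒞 1) ⊗[k] (↥(𝒞 1) ⊗[k] ↥(TP k ↥(𝒞 1) (j + 1)))) :
    (w ∈ (Ctilde k C 𝒞 D (j + 1) :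
        Submodule k (↥(𝒞 1) ⊗[k] (↥(𝒞 1) ⊗[k] ↥(TP k ↥(𝒞 1) (j + 1)))))) ↔
      (∃ t : C ⊗[k] ↥(TP k ↥(𝒞 1) (j + 1)), w = TensorProduct.assoc k _ _ _
        (map (map (cmp k C 𝒞 1) (cmp k C 𝒞 1) ∘ₗ Coalgebra.comul (R := k)) LinearMap.id t)) ∧
      ∀ φ : ↥(𝒞 1) →ₗ[k] k,
        contrL (B := ↥(TP k ↥(𝒞 1) (j + 2))) φ w ∈ Ctilde k C 𝒞 D j := by
  rw [← mem_insertK_zero D]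
  refine (mem_Ctilde D (j + 1) w).trans ?_
  constructor
  · intro h
    refine ⟨h 0 (by omega), fun φ => (mem_Ctilde D j _).2 fun i hi => ?_⟩
    exact contrL_mem _ w (h (i + 1) (by omega)) φ
  · rintro ⟨h0, h⟩ i hi
    cases i with
    | zero => exact h0
    | succ i => exact mem_range_of_contrL _ w fun φ =>
        (mem_Ctilde D j _).1 (h φ) i (by omega)

lemma contrL_map_mem {A A' B B' : Type} [AddCommGroup A] [Module k A] [AddCommGroup A']
    [Module k A'] [AddCommGroup B] [Module k B] [AddCommGroup B'] [Module k B']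
    (f : A →ₗ[k] A') (g : B →ₗ[k] B') (φ : A' →ₗ[k] k) (z : A ⊗[k] B) :
    contrL φ (map f g z) ∈ LinearMap.range g := by
  have := mm LinearMap.id g f LinearMap.id z
  rw [LinearMap.id_comp, LinearMap.comp_id] at this
  rw [← this, contrL_map]
  exact ⟨_, rfl⟩

lemma range_le_Ctilde (D : GradedCoalgebraData k C 𝒞) (j : ℕ) :
    LinearMap.range (deltaIter k C 𝒞 D (j + 2)) ≤ Ctilde k C 𝒞 D j := by
  induction j with
  | zero =>
    rintro _ ⟨x, rfl⟩
    simp only [Ctilde, Submodule.mem_iInf, Finset.mem_range]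
    intro i hi
    obtain rfl : i = 0 := by omega
    change deltaIter k C 𝒞 D 2 x ∈ Submodule.map (D.Δc 1 1) (𝒞 2)
    rw [map_Δc_eq_range]
    exact ⟨x, (deltaIter_comul D 0 x).symm⟩
  | succ j ih =>
    rintro _ ⟨x, rfl⟩
    refine (mem_Ctilde_succ D j _).2 ⟨⟨map LinearMap.id (deltaIter k C 𝒞 D (j + 1))
      (Coalgebra.comul x), ?_⟩, fun φ => ?_⟩
    · rw [mm, LinearMap.id_comp, LinearMap.comp_id, comul_assoc_map]
      refine (deltaIter_comul D (j + 1) x).trans ?_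
      congr 2
      exact LinearMap.ext fun y => deltaIter_comul D j y
    · apply ih
      rw [deltaIter_comul]
      exact contrL_map_mem _ _ _ _

lemma quadratic_of_quadCond (D : GradedCoalgebraData k C 𝒞) (hs : D.Strong)
    (hQ : ∀ n, QuadCond k C 𝒞 n) : CoalgQuadratic k C 𝒞 D := by
  intro j
  refine ⟨fun x hx h => ?_, ?_⟩
  · obtain ⟨r, hr⟩ := exists_retraction_iter D hs (j + 1)
    rw [← pr_of_mem hx, ← hr, LinearMap.comp_apply, h, map_zero]
  rw [map_deltaIter_eq_range]
  refine le_antisymm (range_le_Ctilde D j) ?_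
  induction j with
  | zero =>
    intro w hw
    simp only [Ctilde, Submodule.mem_iInf, Finset.mem_range] at hw
    have hw0 : w ∈ Submodule.map (D.Δc 1 1) (𝒞 2) := hw 0 (by omega)
    rw [map_Δc_eq_range] at hw0
    obtain ⟨x, hx⟩ := hw0
    exact ⟨x, (deltaIter_comul D 0 x).trans hx⟩
  | succ j ih =>
    intro w hw
    obtain ⟨⟨t, ht⟩, hφ⟩ := (mem_Ctilde_succ D j w).1 hw
    obtain ⟨r, hr⟩ := exists_retraction_iter D hs j
    -- lift `w` along `id ⊗ Δ(m-1)`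
    have hlift : ∃ u : C ⊗[k] C, map (pr k C 𝒞 1) (pr k C 𝒞 (j + 2)) u = u ∧
        w = map (cmp k C 𝒞 1) (deltaIter k C 𝒞 D (j + 2)) u := by
      obtain ⟨v, hv⟩ := mem_range_of_contrL _ _ fun φ => ih (hφ φ)
      have hsurj : Function.Surjective (map (LinearMap.id (M := ↥(𝒞 1)))
          (deltaIter k C 𝒞 D (j + 2)).rangeRestrict) :=
        TensorProduct.map_surjective Function.surjective_id
          (LinearMap.surjective_rangeRestrict _)
      obtain ⟨v, rfl⟩ := hsurj v
      refine ⟨map (𝒞 1).subtype (pr k C 𝒞 (j + 2)) v, ?_, ?_⟩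
      · rw [mm, pr_comp_self]
        congr 2
        exact LinearMap.ext fun y => pr_of_mem y.2
      · rw [← hv, mm, mm, deltaIter_comp_pr]
        congr 2
        exact LinearMap.ext fun y => (cmp_of_mem y.2).symm
    obtain ⟨u, hu, hwu⟩ := hlift
    have hE : deltaIter k C 𝒞 D (j + 2) =
        map (cmp k C 𝒞 1) (deltaIter k C 𝒞 D (j + 1)) ∘ₗ Coalgebra.comul :=
      LinearMap.ext fun y => deltaIter_comul D j y
    have hwt : map (cmp k C 𝒞 1)
        (map (cmp k C 𝒞 1) (deltaIter k C 𝒞 D (j + 1)) ∘ₗ Coalgebra.comul) u =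
        TensorProduct.assoc k _ _ _ (map (map (cmp k C 𝒞 1) (cmp k C 𝒞 1) ∘ₗ
          Coalgebra.comul (R := k)) LinearMap.id t) := by
      rw [← ht, hwu, hE]
      rfl
    obtain ⟨c, hc⟩ := hQ j u hu ⟨map LinearMap.id r t, by
      have h := congrArg (map (𝒞 1).subtype (map (𝒞 1).subtype r)) hwt
      rw [← assoc_mm, mm, mm, LinearMap.comp_id, ← LinearMap.comp_assoc, ← map_comp,
        ← LinearMap.comp_assoc, ← map_comp, hr, subtype_comp_cmp] at h
      rw [mm, LinearMap.comp_id, LinearMap.id_comp]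
      refine Eq.trans ?_ h
      conv_lhs => rw [← hu]
      conv_rhs => rw [← hu]
      rw [mm, mm, pr_comp_self]
      rfl⟩
    refine ⟨c, ?_⟩
    rw [deltaIter_dl, hwu, hc]

lemma quadCond_of_quadratic (D : GradedCoalgebraData k C 𝒞) (hs : D.Strong)
    (hq : CoalgQuadratic k C 𝒞 D) (j : ℕ) : QuadCond k C 𝒞 j := by
  rintro u hu ⟨t, ht⟩
  have hE : deltaIter k C 𝒞 D (j + 2) =
      map (cmp k C 𝒞 1) (deltaIter k C 𝒞 D (j + 1)) ∘ₗ dl k C 𝒞 1 (j + 1) :=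
    LinearMap.ext fun y => deltaIter_dl D j y
  have hK : map (cmp k C 𝒞 1) (cmp k C 𝒞 1) ∘ₗ dl k C 𝒞 1 1 =
      map (cmp k C 𝒞 1) (cmp k C 𝒞 1) ∘ₗ Coalgebra.comul := by
    rw [dl, ← LinearMap.comp_assoc, ← map_comp, cmp_comp_pr]
  have hmem := (mem_Ctilde_succ D j
    (map (cmp k C 𝒞 1) (deltaIter k C 𝒞 D (j + 2)) u)).2
    ⟨⟨map LinearMap.id (deltaIter k C 𝒞 D (j + 1)) t, by
      rw [mm, LinearMap.comp_id, LinearMap.id_comp, ← hK]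
      have h := congrArg (map (cmp k C 𝒞 1)
        (map (cmp k C 𝒞 1) (deltaIter k C 𝒞 D (j + 1)))) ht
      rw [mm, ← assoc_mm, mm, LinearMap.comp_id, LinearMap.comp_id, ← hE] at h
      exact h⟩, fun φ => by
      rw [← (hq j).2, map_deltaIter_eq_range]
      exact contrL_map_mem _ _ _ _⟩
  have h2 := (hq (j + 1)).2
  rw [map_deltaIter_eq_range] at h2
  obtain ⟨c, hc⟩ := h2.ge hmem
  obtain ⟨r, hr⟩ := exists_retraction_iter D hs (j + 1)
  refine ⟨c, ?_⟩
  have h := congrArg (map (𝒞 1).subtype r) ((deltaIter_comul D (j + 1) c).symm.trans hc)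
  rw [mm, mm, hr, subtype_comp_cmp, hu] at h
  exact h.symm

/-! ### The cobar complex in cohomological degree two -/

variable (k C 𝒞) in
/-- The subspace `Ω²(C,m) = ⊕_{p+q=m, p,q≥1} C_p ⊗ C_q` of `C ⊗ C`. -/
def om2 (m : ℕ) : Submodule k (C ⊗[k] C) :=
  ⨆ p ∈ Finset.Icc 1 m, LinearMap.range
    (map (𝒞 p).subtype (if m - p = 0 then (⊥ : Submodule k C) else 𝒞 (m - p)).subtype)

variable (k C) in
/-- The cobar differential `Δ₊ ⊗ id - id ⊗ Δ₊` on `C ⊗ C`. -/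
def d2 (g : C) : C ⊗[k] C →ₗ[k] C ⊗[k] (C ⊗[k] C) :=
  (TensorProduct.assoc k C C C).toLinearMap ∘ₗ map (deltaPlus k C g) LinearMap.id -
    map LinearMap.id (deltaPlus k C g)

/-- `Ext^{2,m} = 0` means that every cocycle in `Ω²(C,m)` is `Δ₊` of an element of `C_m`. -/
lemma subsingleton_ext_iff (g : C) (m : ℕ) (hm : m ≠ 0) :
    Subsingleton (ExtGrp k C 𝒞 (deltaPlus k C g) 2 m) ↔
      ∀ z ∈ om2 k C 𝒞 m, d2 k C g z = 0 → ∃ x ∈ 𝒞 m, deltaPlus k C g x = z := by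
  have hom1 : omega k 𝒞 1 m = 𝒞 m := if_neg hm
  have hd1 : ∀ x : C, cobarD k C (deltaPlus k C g) 1 x = deltaPlus k C g x := by
    intro x
    change (∑ i ∈ Finset.range 1, ((-1 : k) ^ i) • expand k C (deltaPlus k C g) 0 i) x = _
    rw [Finset.sum_range_one, pow_zero, one_smul]
    rfl
  have hd2 : ∀ z : C ⊗[k] C, cobarD k C (deltaPlus k C g) 2 z = d2 k C g z := by
    intro z
    change (∑ i ∈ Finset.range 2, ((-1 : k) ^ i) • expand k C (deltaPlus k C g) 1 i) z = _
    rw [Finset.sum_range_succ, Finset.sum_range_one, pow_zero, one_smul, pow_one, neg_one_smul,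
      ← sub_eq_add_neg]
    rfl
  change Subsingleton (_ ⧸ _) ↔ _
  rw [Submodule.Quotient.subsingleton_iff, Submodule.comap_subtype_eq_top]
  constructor
  · intro h z hz hdz
    obtain ⟨x, hx, hxz⟩ := h (x := z) ⟨(hd2 z).trans hdz, hz⟩
    rw [hom1] at hx
    exact ⟨x, hx, (hd1 x).symm.trans hxz⟩
  · rintro h z ⟨hdz, hz⟩
    obtain ⟨x, hx, hxz⟩ := h z hz ((hd2 z).symm.trans hdz)
    refine ⟨x, ?_, (hd1 x).trans hxz⟩
    rw [hom1]
    exact hx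

lemma om2_component {m p q : ℕ} (h : ¬ (1 ≤ p ∧ 1 ≤ q ∧ p + q = m)) {z : C ⊗[k] C}
    (hz : z ∈ om2 k C 𝒞 m) : map (pr k C 𝒞 p) (pr k C 𝒞 q) z = 0 := by
  suffices om2 k C 𝒞 m ≤ LinearMap.ker (map (pr k C 𝒞 p) (pr k C 𝒞 q)) from this hz
  refine iSup₂_le fun p' hp' => ?_
  rintro _ ⟨t, rfl⟩
  rw [Finset.mem_Icc] at hp'
  rw [LinearMap.mem_ker, ← LinearMap.comp_apply, ← map_comp]
  by_cases hp : p' = p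
  · have : pr k C 𝒞 q ∘ₗ
        (if m - p' = 0 then (⊥ : Submodule k C) else 𝒞 (m - p')).subtype = 0 := by
      refine LinearMap.ext fun y => ?_
      obtain ⟨y, hy⟩ := y
      split_ifs at hy with h0
      · rw [Submodule.mem_bot] at hy
        simp [hy]
      · exact pr_of_mem_ne (by omega) hy
    rw [this]
    simp
  · have : pr k C 𝒞 p ∘ₗ (𝒞 p').subtype = 0 := LinearMap.ext fun y => pr_of_mem_ne hp y.2
    rw [this]
    simp

lemma mem_om2 {m p q : ℕ} (hp : 1 ≤ p) (hq : 1 ≤ q) (hpq : p + q = m) {z : C ⊗[k] C}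
    (hz : map (pr k C 𝒞 p) (pr k C 𝒞 q) z = z) : z ∈ om2 k C 𝒞 m := by
  obtain rfl : q = m - p := by omega
  refine Submodule.mem_iSup_of_mem p (Submodule.mem_iSup_of_mem (by simp; omega) ?_)
  rw [if_neg (by omega)]
  refine ⟨map (cmp k C 𝒞 p) (cmp k C 𝒞 (m - p)) z, ?_⟩
  rw [mm]
  exact hz

section Components

variable (D : GradedCoalgebraData k C 𝒞)

lemma pr_g {a : ℕ} (ha : 1 ≤ a) : pr k C 𝒞 a D.g = 0 := by
  apply pr_of_mem_ne (n := 0) (by omega)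
  rw [D.hC0]
  exact Submodule.mem_span_singleton_self _

/-- The projection onto `C₀` is `x ↦ ε(x) g`. -/
lemma pr_zero_eq (x : C) : pr k C 𝒞 0 x = Coalgebra.counit (R := k) x • D.g := by
  have : pr k C 𝒞 0 = (Coalgebra.counit (R := k) (A := C)).smulRight D.g := by
    apply ext_homog (𝒞 := 𝒞)
    intro n x hx
    rw [LinearMap.smulRight_apply]
    by_cases hn : n = 0
    · subst hn
      rw [pr_of_mem hx]
      rw [D.hC0] at hx
      obtain ⟨c, rfl⟩ := Submodule.mem_span_singleton.1 hx
      rw [map_smul, D.hcu, smul_assoc, one_smul]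
    · rw [pr_of_mem_ne hn hx, D.hcounit n (by omega) x hx, zero_smul]
  rw [this, LinearMap.smulRight_apply]

lemma map_pr_zero_left (x : C) :
    map (pr k C 𝒞 0) LinearMap.id (Coalgebra.comul (R := k) x) = D.g ⊗ₜ[k] x := by
  have h : pr k C 𝒞 0 = LinearMap.toSpanSingleton k C D.g ∘ₗ Coalgebra.counit (R := k) :=
    LinearMap.ext fun x => pr_zero_eq D x
  have h2 := mm (LinearMap.toSpanSingleton k C D.g) LinearMap.id
    (Coalgebra.counit (R := k)) (LinearMap.id (M := C)) (Coalgebra.comul x)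
  rw [LinearMap.id_comp, ← h] at h2
  rw [← h2]
  have h3 : map (Coalgebra.counit (R := k)) (LinearMap.id (M := C)) (Coalgebra.comul x) =
      (1 : k) ⊗ₜ[k] x := Coalgebra.rTensor_counit_comul x
  rw [h3]
  simp

lemma map_pr_zero_right (x : C) :
    map LinearMap.id (pr k C 𝒞 0) (Coalgebra.comul (R := k) x) = x ⊗ₜ[k] D.g := by
  have h : pr k C 𝒞 0 = LinearMap.toSpanSingleton k C D.g ∘ₗ Coalgebra.counit (R := k) :=
    LinearMap.ext fun x => pr_zero_eq D x
  have h2 := mm LinearMap.id (LinearMap.toSpanSingleton k C D.g)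
    (LinearMap.id (M := C)) (Coalgebra.counit (R := k)) (Coalgebra.comul x)
  rw [LinearMap.id_comp, ← h] at h2
  rw [← h2]
  have h3 : map (LinearMap.id (M := C)) (Coalgebra.counit (R := k)) (Coalgebra.comul x) =
      x ⊗ₜ[k] (1 : k) := Coalgebra.lTensor_counit_comul x
  rw [h3]
  simp

lemma deltaPlus_component {a b : ℕ} (ha : 1 ≤ a) (hb : 1 ≤ b) :
    map (pr k C 𝒞 a) (pr k C 𝒞 b) ∘ₗ deltaPlus k C D.g = dl k C 𝒞 a b := by
  ext x
  simp [deltaPlus, dl, pr_g D ha, pr_g D hb]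

/-- The components of `Δ₊` with an index `0` depend only on the degree `0` part, so they vanish
on elements of positive degree. -/
lemma deltaPlus_component_zero {a b : ℕ} (h : a = 0 ∨ b = 0) :
    ∃ f : C →ₗ[k] C ⊗[k] C,
      map (pr k C 𝒞 a) (pr k C 𝒞 b) ∘ₗ deltaPlus k C D.g = f ∘ₗ pr k C 𝒞 0 := by
  have hg : pr k C 𝒞 0 D.g = D.g := pr_of_mem (by
    rw [D.hC0]; exact Submodule.mem_span_singleton_self _)
  rcases h with rfl | rfl
  · refine ⟨- (map LinearMap.id (pr k C 𝒞 b) ∘ₗ (TensorProduct.mk k C C).flip D.g), ?_⟩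
    ext x
    have := mm LinearMap.id (pr k C 𝒞 b) (pr k C 𝒞 0) LinearMap.id (Coalgebra.comul (R := k) x)
    rw [map_pr_zero_left D, LinearMap.id_comp, LinearMap.comp_id] at this
    simp [deltaPlus, ← this, hg]
  · refine ⟨- (map (pr k C 𝒞 a) LinearMap.id ∘ₗ (TensorProduct.mk k C C) D.g), ?_⟩
    ext x
    have := mm (pr k C 𝒞 a) LinearMap.id LinearMap.id (pr k C 𝒞 0) (Coalgebra.comul (R := k) x)
    rw [map_pr_zero_right D, LinearMap.id_comp, LinearMap.comp_id] at this
    simp [deltaPlus, ← this, hg]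

lemma d2_component (a b c : ℕ) (z : C ⊗[k] C) :
    map (pr k C 𝒞 a) (map (pr k C 𝒞 b) (pr k C 𝒞 c)) (d2 k C D.g z) =
      TensorProduct.assoc k C C C
        (map (map (pr k C 𝒞 a) (pr k C 𝒞 b) ∘ₗ deltaPlus k C D.g) (pr k C 𝒞 c) z) -
      map (pr k C 𝒞 a) (map (pr k C 𝒞 b) (pr k C 𝒞 c) ∘ₗ deltaPlus k C D.g) z := by
  rw [d2, LinearMap.sub_apply, map_sub, mm, LinearMap.comp_id, LinearMap.comp_apply,
    LinearEquiv.coe_coe, ← assoc_mm, mm, LinearMap.comp_id]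

/-- An element `z` of `Ω²(C,m)` is a cocycle as soon as
`(Δ_{a,b} ⊗ id) z_{a+b,c} = (id ⊗ Δ_{b,c}) z_{a,b+c}` for all
`a, b, c ≥ 1`. -/
lemma d2_eq_zero_of_components {m : ℕ} (z : C ⊗[k] C) (hz : z ∈ om2 k C 𝒞 m)
    (h : ∀ a b c, 1 ≤ a → 1 ≤ b → 1 ≤ c →
      TensorProduct.assoc k C C C (map (dl k C 𝒞 a b) (pr k C 𝒞 c) z) =
        map (pr k C 𝒞 a) (dl k C 𝒞 b c) z) : d2 k C D.g z = 0 := by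
  have hl : map (pr k C 𝒞 0) LinearMap.id z = 0 := by
    apply eq_zero_of_pr_right (𝒞 := 𝒞)
    intro n
    rw [mm, LinearMap.comp_id, LinearMap.id_comp]
    exact om2_component (by omega) hz
  have hr : map LinearMap.id (pr k C 𝒞 0) z = 0 := by
    apply eq_zero_of_pr_left (𝒞 := 𝒞)
    intro n
    rw [mm, LinearMap.comp_id, LinearMap.id_comp]
    exact om2_component (by omega) hz
  have hl' : ∀ {A B : Type} [AddCommGroup A] [Module k A] [AddCommGroup B] [Module k B]
      (f : C →ₗ[k] A) (f' : C →ₗ[k] B), map (f ∘ₗ pr k C 𝒞 0) f' z = 0 := by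
    intro A B _ _ _ _ f f'
    rw [← LinearMap.comp_id f', ← mm, hl, map_zero]
  have hr' : ∀ {A B : Type} [AddCommGroup A] [Module k A] [AddCommGroup B] [Module k B]
      (f : C →ₗ[k] A) (f' : C →ₗ[k] B), map f (f' ∘ₗ pr k C 𝒞 0) z = 0 := by
    intro A B _ _ _ _ f f'
    rw [← LinearMap.comp_id f, ← mm, hr, map_zero]
  apply eq_zero_of_pr₃ (𝒞 := 𝒞)
  intro a b c
  rw [d2_component, sub_eq_zero]
  have h1 : a = 0 ∨ b = 0 ∨ c = 0 →
      map (map (pr k C 𝒞 a) (pr k C 𝒞 b) ∘ₗ deltaPlus k C D.g) (pr k C 𝒞 c) z = 0 := by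
    intro h0
    by_cases hc : c = 0
    · subst hc
      exact hr' _ LinearMap.id
    · obtain ⟨f, hf⟩ := deltaPlus_component_zero D (a := a) (b := b) (by tauto)
      rw [hf, hl']
  have h2 : a = 0 ∨ b = 0 ∨ c = 0 →
      map (pr k C 𝒞 a) (map (pr k C 𝒞 b) (pr k C 𝒞 c) ∘ₗ deltaPlus k C D.g) z = 0 := by
    intro h0
    by_cases ha : a = 0
    · subst ha
      exact hl' LinearMap.id _
    · obtain ⟨f, hf⟩ := deltaPlus_component_zero D (a := b) (b := c) (by tauto)
      rw [hf, hr']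
  by_cases h0 : a = 0 ∨ b = 0 ∨ c = 0
  · rw [h1 h0, h2 h0, map_zero]
  · push Not at h0
    rw [deltaPlus_component D (by omega) (by omega), deltaPlus_component D (by omega) (by omega)]
    exact h a b c (by omega) (by omega) (by omega)

end Components

/-! ### Vanishing of `Ext²` and the quadratic condition -/

/-- `Δ_{p,q}` with the degree of its source given by an equation. -/
lemma dl_comp_pr' (D : GradedCoalgebraData k C 𝒞) {p q m : ℕ} (h : p + q = m) :
    dl k C 𝒞 p q ∘ₗ pr k C 𝒞 m = dl k C 𝒞 p q := by
  subst h
  exact dl_comp_pr D p q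

lemma dl_comp_pr_ne (D : GradedCoalgebraData k C 𝒞) {p q m : ℕ} (h : p + q ≠ m) :
    dl k C 𝒞 p q ∘ₗ pr k C 𝒞 m = 0 := by
  rw [← dl_comp_pr D, LinearMap.comp_assoc, pr_comp_ne h.symm, LinearMap.comp_zero]

lemma pr_dl (p q : ℕ) (x : C) :
    map (pr k C 𝒞 p) (pr k C 𝒞 q) (dl k C 𝒞 p q x) = dl k C 𝒞 p q x := by
  rw [dl, LinearMap.comp_apply, mm, pr_comp_self, pr_comp_self]

/-- If `z` is a cocycle, then `z_{1,m-1}` satisfies the hypotheses of `QuadCond`, hence equals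
`Δ_{1,m-1} c`. The cocycle equations and the injectivity of `Δ_{1,b}` then force all other
components of `z` to be those of `Δ₊ c`. -/
lemma ext_of_quadCond (D : GradedCoalgebraData k C 𝒞) (hs : D.Strong) (n : ℕ)
    (hQ : QuadCond k C 𝒞 n) (z : C ⊗[k] C) (hz : z ∈ om2 k C 𝒞 (n + 3))
    (hd : d2 k C D.g z = 0) : ∃ x ∈ 𝒞 (n + 3), deltaPlus k C D.g x = z := by
  have hcomp : ∀ a b c, 1 ≤ a → 1 ≤ b → 1 ≤ c →
      TensorProduct.assoc k C C C (map (dl k C 𝒞 a b) (pr k C 𝒞 c) z) =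
        map (pr k C 𝒞 a) (dl k C 𝒞 b c) z := by
    intro a b c ha hb hc
    have h := d2_component D a b c z
    rw [hd, map_zero, deltaPlus_component D ha hb, deltaPlus_component D hb hc] at h
    exact (sub_eq_zero.1 h.symm)
  have hu : ∀ b q, b + q = n + 2 →
      map LinearMap.id (dl k C 𝒞 b q) (map (pr k C 𝒞 1) (pr k C 𝒞 (n + 2)) z) =
        map (pr k C 𝒞 1) (dl k C 𝒞 b q) z := by
    intro b q hbq
    rw [mm, LinearMap.id_comp, dl_comp_pr' D hbq]
  obtain ⟨c, hc⟩ := hQ (map (pr k C 𝒞 1) (pr k C 𝒞 (n + 2)) z)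
    (by rw [mm, pr_comp_self, pr_comp_self])
    ⟨map LinearMap.id (pr k C 𝒞 (n + 1)) z, by
      rw [hu 1 (n + 1) (by omega), mm, LinearMap.comp_id, LinearMap.id_comp]
      exact (hcomp 1 1 (n + 1) le_rfl le_rfl (by omega)).symm⟩
  have hcz : ∀ p q, 1 ≤ p → 1 ≤ q → p + q = n + 3 →
      map (pr k C 𝒞 p) (pr k C 𝒞 q) z = dl k C 𝒞 p q c := by
    intro p q hp hq hpq
    rcases Nat.lt_or_ge 1 p with h1 | h1
    · obtain ⟨b, rfl⟩ : ∃ b, p = 1 + b := ⟨p - 1, by omega⟩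
      obtain ⟨r, hr⟩ := exists_retraction D hs 1 b
      have h := hcomp 1 b q le_rfl (by omega) hq
      rw [← hu b q (by omega), hc, show n + 2 = b + q by omega, ← coassoc_comp D] at h
      -- cancel the injective map `Δ_{1,b} ⊗ id`
      have h' := congrArg (map r LinearMap.id)
        ((TensorProduct.assoc k C C C).injective h)
      rw [mm, mm, hr, LinearMap.id_comp, LinearMap.comp_id] at h'
      rw [h', ← pr_dl, mm, pr_comp_self, LinearMap.id_comp]
    · obtain rfl : p = 1 := by omega
      obtain rfl : q = n + 2 := by omega
      exact hc
  refine ⟨pr k C 𝒞 (n + 3) c, pr_mem _ _, ?_⟩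
  rw [← sub_eq_zero]
  apply eq_zero_of_pr₂ (𝒞 := 𝒞)
  intro p q
  rw [map_sub, sub_eq_zero, ← LinearMap.comp_apply (map _ _)]
  by_cases h0 : p = 0 ∨ q = 0
  · obtain ⟨f, hf⟩ := deltaPlus_component_zero D h0
    rw [hf, om2_component (by omega) hz, LinearMap.comp_apply,
      pr_of_mem_ne (by omega) (pr_mem (n + 3) c), map_zero]
  · rw [deltaPlus_component D (by omega) (by omega), ← LinearMap.comp_apply]
    by_cases hpq : p + q = n + 3
    · rw [dl_comp_pr' D hpq, hcz p q (by omega) (by omega) hpq]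
    · rw [dl_comp_pr_ne D hpq, om2_component (by omega) hz, LinearMap.zero_apply]

/-- Contraction of the last factor of `C ⊗ (C ⊗ C)` after regrouping. -/
lemma contrR_assoc_symm (φ : C →ₗ[k] k) (z : C ⊗[k] (C ⊗[k] C)) :
    contrR φ ((TensorProduct.assoc k C C C).symm z) = map LinearMap.id (contrR φ) z := by
  have : contrR φ ∘ₗ (TensorProduct.assoc k C C C).symm.toLinearMap =
      map LinearMap.id (contrR φ) := by
    apply TensorProduct.ext_threefold'
    intro x y z
    simp
  exact LinearMap.congr_fun this z

/-- Coassociativity with the last factor contracted. -/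
lemma dl_contr (D : GradedCoalgebraData k C 𝒞) (a b q : ℕ) (φ : C →ₗ[k] k) :
    dl k C 𝒞 a b ∘ₗ contrR φ ∘ₗ dl k C 𝒞 (a + b) q =
      map LinearMap.id (contrR φ ∘ₗ dl k C 𝒞 b q) ∘ₗ dl k C 𝒞 a (b + q) := by
  ext x
  rw [LinearMap.comp_apply, LinearMap.comp_apply, ← contrR_map,
    ← LinearEquiv.symm_apply_apply (TensorProduct.assoc k C C C) (map _ _ _), coassoc_comp D,
    contrR_assoc_symm, mm, LinearMap.id_comp]
  rfl

lemma contrR_map_right {A B B' : Type} [AddCommGroup A] [Module k A] [AddCommGroup B]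
    [Module k B] [AddCommGroup B'] [Module k B'] (ψ : B' →ₗ[k] k) (f : B →ₗ[k] B')
    (z : A ⊗[k] B) : contrR ψ (map LinearMap.id f z) = contrR (ψ ∘ₗ f) z := by
  induction z with
  | zero => simp
  | tmul a b => simp
  | add x y hx hy => simp only [map_add, hx, hy]

/-- The relation `(Δ_{1,p} ⊗ id) v = (id ⊗ Δ_{p,q}) u` with the last factor contracted. -/
lemma dl_contr_of_eq {p q : ℕ} {u v : C ⊗[k] C}
    (h : TensorProduct.assoc k C C C (map (dl k C 𝒞 1 p) LinearMap.id v) =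
      map LinearMap.id (dl k C 𝒞 p q) u) (φ : C →ₗ[k] k) :
    dl k C 𝒞 1 p (contrR φ v) = map LinearMap.id (contrR φ ∘ₗ dl k C 𝒞 p q) u := by
  rw [← LinearEquiv.eq_symm_apply] at h
  rw [← contrR_map, h, contrR_assoc_symm, mm, LinearMap.id_comp]

/-- If `QuadCond` holds in lower degrees, then a tensor `u` satisfying its hypotheses extends
to components `u_{p+1,q} ∈ C_{p+1} ⊗ C_q` with
`(Δ_{1,p} ⊗ id) u_{p+1,q} = (id ⊗ Δ_{p,q}) u`. For `p = 1` this is the hypothesis on `u`;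
for `p ≥ 2` it follows from `QuadCond` in lower degree, tensored with `C_q`. -/
lemma exists_component (D : GradedCoalgebraData k C 𝒞) (n : ℕ)
    (ih : ∀ n' < n, QuadCond k C 𝒞 n') (u t : C ⊗[k] C)
    (hu : map (pr k C 𝒞 1) (pr k C 𝒞 (n + 2)) u = u)
    (ht : map LinearMap.id (dl k C 𝒞 1 (n + 1)) u =
      TensorProduct.assoc k C C C (map (dl k C 𝒞 1 1) LinearMap.id t))
    (p q : ℕ) (hp : 1 ≤ p) (hq : 1 ≤ q) (hpq : p + q = n + 2) :
    ∃ v : C ⊗[k] C, map (pr k C 𝒞 (1 + p)) (pr k C 𝒞 q) v = v ∧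
      TensorProduct.assoc k C C C (map (dl k C 𝒞 1 p) LinearMap.id v) =
        map LinearMap.id (dl k C 𝒞 p q) u := by
  have hpru : ∀ {A : Type} [AddCommGroup A] [Module k A] (f : C →ₗ[k] A),
      map (pr k C 𝒞 1) f u = map LinearMap.id f u := by
    intro A _ _ f
    conv_lhs => rw [← hu]
    conv_rhs => rw [← hu]
    rw [mm, mm, pr_comp_self, LinearMap.id_comp]
  have key : ∃ v : C ⊗[k] C, map (dl k C 𝒞 1 p) LinearMap.id v =
      (TensorProduct.assoc k C C C).symm (map LinearMap.id (dl k C 𝒞 p q) u) := by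
    rcases Nat.lt_or_ge 1 p with h1 | h1
    · obtain ⟨s, rfl⟩ : ∃ s, p = s + 2 := ⟨p - 2, by omega⟩
      apply exists_map_left_eq
      intro φ
      rw [contrR_assoc_symm, mm, LinearMap.id_comp]
      apply ih s (by omega)
      · rw [mm, LinearMap.comp_id]
        refine (hpru _).trans ?_
        congr 2
        ext x
        rw [LinearMap.comp_apply, LinearMap.comp_apply, ← contrR_map]
        congr 1
        conv_lhs => rw [← pr_dl, mm, pr_comp_self, LinearMap.id_comp]
        exact pr_dl _ _ _
      · refine ⟨map LinearMap.id (contrR φ ∘ₗ dl k C 𝒞 (s + 1) q) t, ?_⟩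
        have h := dl_contr D 1 (s + 1) q φ
        rw [show 1 + (s + 1) = s + 2 by omega, show s + 1 + q = n + 1 by omega] at h
        rw [mm, LinearMap.id_comp, h, mm, LinearMap.comp_id, LinearMap.id_comp]
        have h2 := mm LinearMap.id (map LinearMap.id (contrR φ ∘ₗ dl k C 𝒞 (s + 1) q))
          LinearMap.id (dl k C 𝒞 1 (n + 1)) u
        rw [LinearMap.id_comp] at h2
        rw [← h2, ht, ← assoc_mm, mm, map_id, LinearMap.id_comp, LinearMap.comp_id]
    · obtain rfl : p = 1 := by omega
      obtain rfl : q = n + 1 := by omega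
      exact ⟨t, by rw [ht, LinearEquiv.symm_apply_apply]⟩
  obtain ⟨v, hv⟩ := key
  refine ⟨map (pr k C 𝒞 (1 + p)) (pr k C 𝒞 q) v, ?_, ?_⟩
  · rw [mm, pr_comp_self, pr_comp_self]
  · have h := congrArg (TensorProduct.assoc k C C C) hv
    rw [LinearEquiv.apply_symm_apply] at h
    have h' := congrArg (map LinearMap.id (map LinearMap.id (pr k C 𝒞 q))) h
    rw [← assoc_mm, mm, mm, map_id, LinearMap.id_comp, LinearMap.comp_id, LinearMap.id_comp] at h'
    rw [mm, dl_comp_pr D, LinearMap.id_comp, h']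
    congr 2
    ext x
    conv_lhs => rw [LinearMap.comp_apply, ← pr_dl, mm, pr_comp_self, LinearMap.id_comp]
    exact pr_dl _ _ _

/-- A tensor `u` satisfying the hypotheses of `QuadCond` is the `(1, m-1)` component of a cocycle,
whose other components come from `exists_component`; if the cocycle is `Δ₊ x`, then
`u = Δ_{1,m-1} x`. -/
lemma quadCond_of_ext (D : GradedCoalgebraData k C 𝒞) (hs : D.Strong) (n : ℕ)
    (ih : ∀ n' < n, QuadCond k C 𝒞 n')
    (hext : ∀ z ∈ om2 k C 𝒞 (n + 3), d2 k C D.g z = 0 →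
      ∃ x ∈ 𝒞 (n + 3), deltaPlus k C D.g x = z) : QuadCond k C 𝒞 n := by
  rintro u hu ⟨t, ht⟩
  have hex : ∀ p q, ∃ v : C ⊗[k] C, 1 ≤ p → 1 ≤ q → p + q = n + 3 →
      map (pr k C 𝒞 p) (pr k C 𝒞 q) v = v ∧ (p = 1 → v = u) ∧
      ∀ p', 1 ≤ p' → p = 1 + p' →
        TensorProduct.assoc k C C C (map (dl k C 𝒞 1 p') LinearMap.id v) =
          map LinearMap.id (dl k C 𝒞 p' q) u := by
    intro p q
    rcases Nat.lt_or_ge 1 p with h1 | h1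
    · obtain ⟨p', rfl⟩ : ∃ p', p = 1 + p' := ⟨p - 1, by omega⟩
      by_cases h : 1 ≤ q ∧ 1 + p' + q = n + 3
      · obtain ⟨v, hv, hv'⟩ := exists_component D n ih u t hu ht p' q (by omega) h.1 (by omega)
        refine ⟨v, fun _ _ _ => ⟨hv, fun h => by omega, fun p'' _ h'' => ?_⟩⟩
        obtain rfl : p'' = p' := by omega
        exact hv'
      · exact ⟨0, fun _ h2 h3 => absurd ⟨h2, h3⟩ h⟩
    · refine ⟨u, fun h2 h3 h4 => ⟨?_, fun _ => rfl, fun p' h5 h6 => by omega⟩⟩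
      obtain rfl : p = 1 := by omega
      obtain rfl : q = n + 2 := by omega
      exact hu
  choose U hU using hex
  -- the components of the cocycle satisfy `(Δ_{a,b} ⊗ id) U_{a+b,c} = (id ⊗ Δ_{b,c}) U_{a,b+c}`
  have hcoc : ∀ a b c, 1 ≤ a → 1 ≤ b → 1 ≤ c → a + b + c = n + 3 →
      TensorProduct.assoc k C C C (map (dl k C 𝒞 a b) LinearMap.id (U (a + b) c)) =
        map LinearMap.id (dl k C 𝒞 b c) (U a (b + c)) := by
    intro a b c ha hb hc habc
    obtain ⟨h1, h2, h3⟩ := hU (a + b) c (by omega) hc habc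
    obtain ⟨h4, h5, h6⟩ := hU a (b + c) ha (by omega) (by omega)
    rcases Nat.lt_or_ge 1 a with ha1 | ha1
    · obtain ⟨e, rfl⟩ : ∃ e, a = 1 + e := ⟨a - 1, by omega⟩
      obtain ⟨r, hr⟩ := exists_retraction D hs 1 e
      have h7 := h3 (e + b) (by omega) (by omega)
      have h8 := h6 e (by omega) rfl
      rw [← LinearEquiv.eq_symm_apply]
      -- contract the last two factors, then compare after the injective map `Δ_{1,e}`
      rw [← sub_eq_zero]
      apply eq_zero_of_contrR
      intro φ
      apply eq_zero_of_contrR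
      intro ψ
      rw [map_sub, map_sub, sub_eq_zero, contrR_map, contrR_assoc_symm, mm, LinearMap.id_comp,
        contrR_map_right]
      have hX : pr k C 𝒞 (1 + e) (contrR ψ (dl k C 𝒞 (1 + e) b (contrR φ (U (1 + e + b) c)))) =
          contrR ψ (dl k C 𝒞 (1 + e) b (contrR φ (U (1 + e + b) c))) := by
        rw [← contrR_map]
        congr 1
        conv_lhs => rw [← pr_dl, mm, pr_comp_self, LinearMap.id_comp]
        exact pr_dl _ _ _
      have hY : pr k C 𝒞 (1 + e) (contrR (ψ ∘ₗ contrR φ ∘ₗ dl k C 𝒞 b c) (U (1 + e) (b + c))) =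
          contrR (ψ ∘ₗ contrR φ ∘ₗ dl k C 𝒞 b c) (U (1 + e) (b + c)) := by
        rw [← contrR_map]
        congr 1
        conv_lhs => rw [← h4, mm, pr_comp_self, LinearMap.id_comp]
        exact h4
      rw [← hX, ← hY, ← hr, LinearMap.comp_apply, LinearMap.comp_apply]
      congr 1
      have h9 := LinearMap.congr_fun (dl_contr D 1 e b ψ) (contrR φ (U (1 + e + b) c))
      simp only [LinearMap.comp_apply] at h9
      rw [dl_contr_of_eq h8, h9, dl_contr_of_eq h7, mm, LinearMap.id_comp]
      congr 2
      ext x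
      have h11 := LinearMap.congr_fun (dl_contr D e b c φ) x
      simp only [LinearMap.comp_apply] at h11 ⊢
      rw [h11, contrR_map_right]
    · obtain rfl : a = 1 := by omega
      rw [h5 rfl, h3 b hb rfl]
  have hcz : ∀ a b, 1 ≤ a → 1 ≤ b → a + b = n + 3 → map (pr k C 𝒞 a) (pr k C 𝒞 b)
      (∑ p ∈ Finset.Icc 1 (n + 2), U p (n + 3 - p)) = U a b := by
    intro a b ha hb hab
    obtain rfl : b = n + 3 - a := by omega
    rw [map_sum, Finset.sum_eq_single a]
    · exact (hU a (n + 3 - a) ha hb hab).1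
    · intro p hp hpa
      rw [Finset.mem_Icc] at hp
      rw [← (hU p (n + 3 - p) (by omega) (by omega) (by omega)).1, mm, pr_comp_ne hpa]
      simp
    · intro h
      rw [Finset.mem_Icc] at h
      omega
  have hzm : (∑ p ∈ Finset.Icc 1 (n + 2), U p (n + 3 - p)) ∈ om2 k C 𝒞 (n + 3) := by
    apply Submodule.sum_mem
    intro p hp
    rw [Finset.mem_Icc] at hp
    exact mem_om2 (p := p) (q := n + 3 - p) (by omega) (by omega) (by omega)
      (hU p (n + 3 - p) (by omega) (by omega) (by omega)).1
  set z := ∑ p ∈ Finset.Icc 1 (n + 2), U p (n + 3 - p)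
  obtain ⟨x, hx, hxz⟩ := hext z hzm (by
    apply d2_eq_zero_of_components D z hzm
    intro a b c ha hb hc
    have h1 := mm (dl k C 𝒞 a b) LinearMap.id (pr k C 𝒞 (a + b)) (pr k C 𝒞 c) z
    have h2 := mm LinearMap.id (dl k C 𝒞 b c) (pr k C 𝒞 a) (pr k C 𝒞 (b + c)) z
    rw [dl_comp_pr D, LinearMap.id_comp] at h1 h2
    rw [← h1, ← h2]
    by_cases habc : a + b + c = n + 3
    · rw [hcz (a + b) c (by omega) hc habc, hcz a (b + c) ha (by omega) (by omega)]
      exact hcoc a b c ha hb hc habc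
    · rw [om2_component (by omega) hzm, om2_component (by omega) hzm]
      simp)
  refine ⟨x, ?_⟩
  rw [← (hU 1 (n + 2) le_rfl (by omega) (by omega)).2.1 rfl,
    ← hcz 1 (n + 2) le_rfl (by omega) (by omega), ← hxz,
    ← deltaPlus_component D le_rfl (by omega), LinearMap.comp_apply]

end Proof

/-- **Statement 16.** A connected strongly graded `k`-coalgebra `C` is quadratic if and
only if `Ext_C^{2,m}(k,k) = 0` for all `m ≥ 3`. -/
theorem statement16 (D : GradedCoalgebraData k C 𝒞) (hstrong : D.Strong) :
    CoalgQuadratic k C 𝒞 D ↔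
      ∀ m : ℕ, 3 ≤ m → Subsingleton (ExtGrp k C 𝒞 (deltaPlus k C D.g) 2 m) := by
  constructor
  · intro hq m hm
    obtain ⟨n, rfl⟩ : ∃ n, m = n + 3 := ⟨m - 3, by omega⟩
    rw [subsingleton_ext_iff _ _ (by omega)]
    exact ext_of_quadCond D hstrong n (quadCond_of_quadratic D hstrong hq n)
  · intro h
    apply quadratic_of_quadCond D hstrong
    intro n
    induction n using Nat.strong_induction_on with
    | _ n ih =>
      exact quadCond_of_ext D hstrong n ih
        ((subsingleton_ext_iff D.g (n + 3) (by omega)).1 (h (n + 3) (by omega)))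

end Koszul
end
end
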